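/- arXiv:math/0301217 — 2 statements merged into one kernel-verified Lean document; each statement's English description precedes it below -/
import Mathlib

section
/- Let f be a continuous real-valued function on [-1,1] that is not identically zero, let β > 0, and let (n_j) be a strictly increasing sequence of positive integers with lim_{j→∞} n_{j+1}/n_j = +∞ such that E_{n_j}(f) ≤ e^{-β n_j} for every j. Assume moreover that 0 < m_f(E*_{n_j}(f)) < 1 for every j. Then lim_{j→∞} (log |log m_f(E*_{n_j}(f))|) / j = +∞. -/
open Filter MeasureTheory Set

/-- Best uniform approximation error by polynomials of degree ≤ n on [-1,1]. -/
noncomputable def En (f : ℝ → ℝ) (n : ℕ) : ℝ :=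
  sInf ((fun P : Polynomial ℝ => sSup ((fun x => |f x - P.eval x|) '' Set.Icc (-1:ℝ) 1)) ''
    {P : Polynomial ℝ | P.natDegree ≤ n})

/-- E*_n(f) = max(E_n(f), e^{-n}). -/
noncomputable def Estar (f : ℝ → ℝ) (n : ℕ) : ℝ := max (En f n) (Real.exp (-(n : ℝ)))

/-- m_f(t): the Lebesgue measure of {x ∈ [-1,1] : |f x| ≤ t}. -/
noncomputable def mf (f : ℝ → ℝ) (t : ℝ) : ℝ :=
  (volume {x : ℝ | x ∈ Set.Icc (-1:ℝ) 1 ∧ |f x| ≤ t}).toReal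

/-!
If a polynomial `P` of degree at most `n` is at most `exp (ε n)` on `[-1, 1]` and at least
`exp (-ε n)` at some point `x₀` of it, with `ε` small, then `P` has few roots near `x₀`. Splitting
these roots off leaves a factor that is nearly constant near `x₀`, and by a Cartan type estimate for
the product over the split-off roots the set where `|P| < exp (-γ n)` occupies only `δ ^ T` of the
`δ`-neighbourhood of `x₀`, with `T` as large as we please.

A continuous `f` with `E*_n(f) ≤ exp (-γ n)` inherits this from its best approximations, wherever
`|f| ≥ exp (-ε n)`. Along `n = n_j → ∞` this first shows that `f` vanishes only on a null set, so
that `m_j = m_f(E*_{n_j}(f)) → 0`. Now `|f| ≥ exp (-n_j)` outside a set of measure `m_j`, hence at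
some point of every interval of length `2 m_j`, and `n_j ≤ ε n_{j+1}` by lacunarity. Covering
`[-1, 1]` by `O(1 / m_j)` balls of radius `O(m_j)` around such points gives `m_{j+1} ≤ m_j ^ K` for
every fixed `K` and all large `j`, so the increments of `log |log m_j|` tend to infinity.
-/

open Metric Polynomial
open scoped Topology

/-! ### Growth of polynomials off the interval -/

lemma exists_sq_add_one_eq_two_mul (z : ℂ) : ∃ w : ℂ, ‖w‖ ≤ 1 ∧ w ^ 2 + 1 = 2 * z * w := by
  obtain ⟨s, hs⟩ := IsAlgClosed.exists_pow_nat_eq (z ^ 2 - 1) two_pos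
  have hnorm : ‖z + s‖ * ‖z - s‖ = 1 := by
    rw [← norm_mul, show (z + s) * (z - s) = 1 by linear_combination -hs, norm_one]
  rcases le_total ‖z + s‖ 1 with h | h
  · exact ⟨z + s, h, by linear_combination hs⟩
  · exact ⟨z - s, by nlinarith [norm_nonneg (z - s)], by linear_combination hs⟩

lemma one_sub_sqrt_le_norm_of_sq_add_one_eq {z w : ℂ} {r : ℝ} (hw : ‖w‖ ≤ 1)
    (hzw : w ^ 2 + 1 = 2 * z * w) (hz : ‖z - 1‖ + ‖z + 1‖ ≤ 2 + 2 * r) :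
    1 - √(2 * r) ≤ ‖w‖ := by
  have hsub : ‖w - 1‖ ^ 2 = 2 * ‖z - 1‖ * ‖w‖ := by
    rw [← norm_pow, show (w - 1) ^ 2 = 2 * (z - 1) * w by linear_combination hzw]
    simp
  have hadd : ‖w + 1‖ ^ 2 = 2 * ‖z + 1‖ * ‖w‖ := by
    rw [← norm_pow, show (w + 1) ^ 2 = 2 * (z + 1) * w by linear_combination hzw]
    simp
  have hsq : (1 - ‖w‖) ^ 2 ≤ ‖w‖ * (2 * r) := by
    have hpar := parallelogram_law_with_norm ℝ w 1
    rw [norm_one] at hpar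
    nlinarith [norm_nonneg w]
  have hr : 0 ≤ 2 * r := by
    have := norm_sub_le (z + 1) (z - 1)
    rw [show z + 1 - (z - 1) = 2 by ring, Complex.norm_ofNat] at this
    linarith
  have := Real.abs_le_sqrt (hsq.trans (mul_le_of_le_one_left hr hw))
  linarith [le_abs_self (1 - ‖w‖)]

lemma sq_add_one_eq_two_mul_re_mul {w : ℂ} (hw : ‖w‖ = 1) : w ^ 2 + 1 = 2 * (w.re : ℂ) * w := by
  have hconj : w * (starRingEnd ℂ) w = 1 := by
    rw [Complex.mul_conj, Complex.normSq_eq_norm_sq, hw]; simp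
  have hre : w + (starRingEnd ℂ) w = 2 * (w.re : ℂ) := by
    rw [Complex.add_conj]; push_cast; rfl
  linear_combination w * hre - hconj

/-- The substitution `2 z = w + w⁻¹` turns `P` into the polynomial `w ^ deg P * P z` in `w`, to
which the maximum principle on the unit disc applies. -/
lemma norm_pow_natDegree_mul_norm_eval_le {P : ℂ[X]} {M : ℝ}
    (hM : ∀ x ∈ Icc (-1 : ℝ) 1, ‖P.eval (x : ℂ)‖ ≤ M) {z w : ℂ} (hw : ‖w‖ ≤ 1)
    (hzw : w ^ 2 + 1 = 2 * z * w) : ‖w‖ ^ P.natDegree * ‖P.eval z‖ ≤ M := by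
  let g : ℂ → ℂ := fun v => (P.scaleRoots v).eval ((v ^ 2 + 1) / 2)
  have hg : ∀ {v y : ℂ}, v ^ 2 + 1 = 2 * y * v → g v = v ^ P.natDegree * P.eval y := by
    intro v y hv
    rw [show g v = (P.scaleRoots v).eval (v * y) by simp only [g, hv]; congr 1; ring]
    exact scaleRoots_eval₂_mul (RingHom.id ℂ) y v
  have hdiff : Differentiable ℂ g := by
    simp only [g, eval_eq_sum_range, natDegree_scaleRoots, coeff_scaleRoots]
    fun_prop
  have hbound : ∀ v ∈ frontier (ball (0 : ℂ) 1), ‖g v‖ ≤ M := by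
    intro v hv
    have hv1 : ‖v‖ = 1 := by simpa [frontier_ball] using hv
    rw [hg (sq_add_one_eq_two_mul_re_mul hv1), norm_mul, norm_pow, hv1, one_pow, one_mul]
    exact hM _ (abs_le.mp (hv1 ▸ Complex.abs_re_le_norm v))
  rw [← norm_pow, ← norm_mul, ← hg hzw]
  exact Complex.norm_le_of_forall_mem_frontier_norm_le isBounded_ball hdiff.diffContOnCl hbound
    (by simpa [closure_ball] using hw)

lemma norm_sub_one_add_norm_add_one_le {x : ℝ} (hx : x ∈ Icc (-1 : ℝ) 1) (y : ℂ) :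
    ‖y - 1‖ + ‖y + 1‖ ≤ 2 + 2 * dist y x := by
  have hsub : ‖y - 1‖ ≤ ‖y - x‖ + (1 - x) := by
    have := norm_add_le (y - x) ((x - 1 : ℝ) : ℂ)
    rw [Complex.norm_real, Real.norm_of_nonpos (by linarith [hx.2])] at this
    simpa using this
  have hadd : ‖y + 1‖ ≤ ‖y - x‖ + (x + 1) := by
    have := norm_add_le (y - x) ((x + 1 : ℝ) : ℂ)
    rw [Complex.norm_real, Real.norm_of_nonneg (by linarith [hx.1])] at this
    simpa [← add_assoc] using this
  rw [dist_eq_norm]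
  linarith

lemma exists_norm_eval_le_mul_exp {ε : ℝ} (hε : 0 < ε) :
    ∃ r > 0, ∀ (P : ℂ[X]) (M : ℝ), (∀ x ∈ Icc (-1 : ℝ) 1, ‖P.eval (x : ℂ)‖ ≤ M) →
      ∀ x ∈ Icc (-1 : ℝ) 1, ∀ y : ℂ, dist y x ≤ r →
        ‖P.eval y‖ ≤ M * Real.exp (ε * P.natDegree) := by
  have hexp : 0 < 1 - Real.exp (-ε) := by simpa using hε
  refine ⟨(1 - Real.exp (-ε)) ^ 2 / 2, by positivity, fun P M hM x hx y hy => ?_⟩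
  obtain ⟨w, hw, hyw⟩ := exists_sq_add_one_eq_two_mul y
  have hw_ge : Real.exp (-ε) ≤ ‖w‖ := by
    have := one_sub_sqrt_le_norm_of_sq_add_one_eq hw hyw (r := (1 - Real.exp (-ε)) ^ 2 / 2)
      ((norm_sub_one_add_norm_add_one_le hx y).trans (by linarith))
    rwa [mul_div_cancel₀ _ two_ne_zero, Real.sqrt_sq hexp.le, sub_sub_cancel] at this
  calc ‖P.eval y‖
      = Real.exp (-ε) ^ P.natDegree * ‖P.eval y‖ * Real.exp (ε * P.natDegree) := by
        rw [← Real.exp_nat_mul, mul_right_comm, ← Real.exp_add]; simp [mul_comm]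
    _ ≤ ‖w‖ ^ P.natDegree * ‖P.eval y‖ * Real.exp (ε * P.natDegree) := by gcongr
    _ ≤ M * Real.exp (ε * P.natDegree) := by
        gcongr; exact norm_pow_natDegree_mul_norm_eval_le hM hw hyw

/-! ### Sublevel sets of monic polynomials -/

lemma card_le_sum_of_one_le_prod {ι : Type*} [Fintype ι] {u : ι → ℝ} (hu : ∀ i, 0 < u i)
    (hprod : 1 ≤ ∏ i, u i) : (Fintype.card ι : ℝ) ≤ ∑ i, u i := by
  have hlog : 0 ≤ ∑ i, Real.log (u i) := by
    rw [← Real.log_prod fun i _ => (hu i).ne']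
    exact Real.log_nonneg hprod
  have hle : ∑ i, Real.log (u i) ≤ ∑ i, (u i - 1) :=
    Finset.sum_le_sum fun i _ => Real.log_le_sub_one_of_pos (hu i)
  simp only [Finset.sum_sub_distrib, Finset.sum_const, Finset.card_univ, nsmul_eq_mul,
    mul_one] at hle
  linarith

lemma integrableOn_ball_abs_rpow {s : ℝ} (hs : -1 < s) (δ : ℝ) :
    IntegrableOn (fun y : ℝ => |y| ^ s) (ball 0 δ) := by
  refine (integrableOn_fun_norm_addHaar volume (f := fun y => y ^ s)).mpr ?_
  rcases le_or_gt δ 0 with hδ | hδ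
  · simp [hδ]
  · simpa using (intervalIntegral.integrableOn_Ioo_rpow_iff hδ).mpr hs

lemma setIntegral_ball_abs_rpow {s δ : ℝ} (hs : -1 < s) (hδ : 0 ≤ δ) :
    ∫ y in ball (0 : ℝ) δ, |y| ^ s = 2 * (δ ^ (s + 1) / (s + 1)) := by
  have hball : (ball (0 : ℝ) δ).indicator (fun y => |y| ^ s)
      = fun y => (Iio δ).indicator (· ^ s) |y| := by
    ext y; simp [indicator]
  rw [← integral_indicator measurableSet_ball, hball, integral_comp_abs,
    setIntegral_indicator measurableSet_Iio, Ioi_inter_Iio, ← integral_Ioc_eq_integral_Ioo,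
    ← intervalIntegral.integral_of_le hδ, integral_rpow (.inl hs),
    Real.zero_rpow (by linarith), sub_zero]

lemma setLIntegral_abs_sub_rpow_le {s δ : ℝ} (hs : -1 < s) (hs' : s ≤ 0) (hδ : 0 < δ) (A : Set ℝ)
    (t : ℝ) :
    ∫⁻ x in A, ENNReal.ofReal (|x - t| ^ s)
      ≤ ENNReal.ofReal (2 * (δ ^ (s + 1) / (s + 1))) + ENNReal.ofReal (δ ^ s) * volume A := by
  let near : ℝ → ENNReal := (ball 0 δ).indicator fun y => ENNReal.ofReal (|y| ^ s)
  have hpoint (x : ℝ) :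
      ENNReal.ofReal (|x - t| ^ s) ≤ near (x - t) + ENNReal.ofReal (δ ^ s) := by
    by_cases hx : x - t ∈ ball 0 δ
    · rw [show near (x - t) = _ from indicator_of_mem hx _]
      exact le_self_add
    · rw [mem_ball_zero_iff, not_lt] at hx
      exact le_add_left (ENNReal.ofReal_le_ofReal (Real.rpow_le_rpow_of_nonpos hδ hx hs'))
  calc ∫⁻ x in A, ENNReal.ofReal (|x - t| ^ s)
      ≤ ∫⁻ x in A, (near (x - t) + ENNReal.ofReal (δ ^ s)) := lintegral_mono hpoint
    _ ≤ (∫⁻ x, near (x - t)) + ENNReal.ofReal (δ ^ s) * volume A := by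
        rw [lintegral_add_right _ measurable_const, setLIntegral_const]
        exact add_le_add_left (setLIntegral_le_lintegral _ _) _
    _ = _ := by
        rw [lintegral_sub_right_eq_self near t, lintegral_indicator measurableSet_ball,
          ← ofReal_integral_eq_lintegral_ofReal (integrableOn_ball_abs_rpow hs δ)
            (ae_of_all _ fun y => Real.rpow_nonneg (abs_nonneg y) s),
          setIntegral_ball_abs_rpow hs hδ.le]

lemma setLIntegral_abs_sub_rpow_neg_half_le {A : Set ℝ} (hA : volume A ≠ ⊤) (t : ℝ) :
    ∫⁻ x in A, ENNReal.ofReal (|x - t| ^ (-(1 / 2) : ℝ))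
      ≤ ENNReal.ofReal (4 * √(volume.real A)) := by
  rcases eq_or_ne (volume A) 0 with hA0 | hA0
  · simp [Measure.restrict_eq_zero.mpr hA0]
  have hv : 0 < volume.real A := ENNReal.toReal_pos hA0 hA
  have hsqrt : √(volume.real A / 4) = √(volume.real A) / 2 := by
    rw [Real.sqrt_div hv.le, show (4 : ℝ) = 2 ^ 2 by norm_num, Real.sqrt_sq two_pos.le]
  have hrpow : (volume.real A / 4) ^ (-(1 / 2) + 1 : ℝ) = √(volume.real A) / 2 := by
    rw [← hsqrt, Real.sqrt_eq_rpow]; norm_num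
  have hrpow' : (volume.real A / 4) ^ (-(1 / 2) : ℝ) = (√(volume.real A) / 2)⁻¹ := by
    rw [← hsqrt, Real.sqrt_eq_rpow, Real.rpow_neg (by positivity)]
  refine (setLIntegral_abs_sub_rpow_le (δ := volume.real A / 4) (by norm_num) (by norm_num)
    (by positivity) A t).trans ?_
  rw [← ofReal_measureReal hA, ← ENNReal.ofReal_mul (by positivity),
    ← ENNReal.ofReal_add (by positivity) (by positivity), hrpow, hrpow']
  refine ENNReal.ofReal_le_ofReal (le_of_eq ?_)
  field_simp
  rw [Real.sq_sqrt hv.le]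
  ring

lemma setLIntegral_abs_sub_div_rpow_neg_half_le {A : Set ℝ} (hA : volume A ≠ ⊤) (t : ℝ) {h : ℝ}
    (hh : 0 ≤ h) :
    ∫⁻ x in A, ENNReal.ofReal ((|x - t| / h) ^ (-(1 / 2) : ℝ))
      ≤ ENNReal.ofReal (√h * (4 * √(volume.real A))) := by
  have hscale (x : ℝ) : (|x - t| / h) ^ (-(1 / 2) : ℝ) = √h * |x - t| ^ (-(1 / 2) : ℝ) := by
    rw [Real.div_rpow (abs_nonneg _) hh, Real.rpow_neg hh, Real.sqrt_eq_rpow, div_inv_eq_mul,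
      mul_comm]
  simp only [hscale, ENNReal.ofReal_mul (Real.sqrt_nonneg h)]
  rw [lintegral_const_mul' _ _ ENNReal.ofReal_ne_top]
  gcongr
  exact setLIntegral_abs_sub_rpow_neg_half_le hA t

lemma card_le_sum_div_rpow {ι : Type*} [Fintype ι] {a : ι → ℝ} {h s : ℝ} (ha : ∀ i, 0 < a i)
    (hh : 0 < h) (hs : s ≤ 0) (hprod : ∏ i, a i ≤ h ^ Fintype.card ι) :
    (Fintype.card ι : ℝ) ≤ ∑ i, (a i / h) ^ s := by
  have hpos (i : ι) : 0 < a i / h := div_pos (ha i) hh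
  refine card_le_sum_of_one_le_prod (fun i => Real.rpow_pos_of_pos (hpos i) s) ?_
  rw [Real.finsetProd_rpow _ _ fun i _ => (hpos i).le]
  refine Real.one_le_rpow_of_pos_of_le_one_of_nonpos (Finset.prod_pos fun i _ => hpos i) ?_ hs
  rw [Finset.prod_div_distrib, Finset.prod_const, Finset.card_univ]
  exact div_le_one_of_le₀ hprod (by positivity)

lemma setOf_prod_abs_sub_lt_subset {ι : Type*} [Fintype ι] (t : ι → ℝ) {h : ℝ} (hh : 0 < h) :
    {x | ∏ i, |x - t i| < h ^ Fintype.card ι} ⊆ ⋃ i, closedBall (t i) h := by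
  intro x hx
  rw [mem_ofPred_eq] at hx
  by_contra! hfar
  simp only [mem_iUnion, mem_closedBall, Real.dist_eq, not_exists, not_le] at hfar
  refine hx.not_ge ?_
  rw [← Finset.card_univ, ← Finset.prod_const]
  exact Finset.prod_le_prod (fun _ _ => hh.le) fun i _ => (hfar i).le

lemma le_sq_mul_of_le_mul_sqrt_mul {c h v : ℝ} (hh : 0 ≤ h) (hv : 0 ≤ v)
    (hle : v ≤ c * √(h * v)) : v ≤ c ^ 2 * h := by
  rcases hv.eq_or_lt with rfl | hv
  · positivity
  · refine le_of_mul_le_mul_right ?_ hv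
    calc v * v ≤ (c * √(h * v)) * (c * √(h * v)) := mul_self_le_mul_self hv.le hle
      _ = c ^ 2 * h * v := by
        rw [mul_mul_mul_comm, Real.mul_self_sqrt (by positivity)]
        ring

/-- Integrate `card ι ≤ ∑ i, (|x - t i| / h) ^ (-1 / 2)` over the sublevel set `A`; each term
contributes `O(√(h * volume A))`. -/
lemma volume_prod_abs_sub_lt_pow_card_le {ι : Type*} [Fintype ι] (t : ι → ℝ) {h : ℝ} (hh : 0 < h) :
    volume {x | ∏ i, |x - t i| < h ^ Fintype.card ι} ≤ ENNReal.ofReal (16 * h) := by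
  set A := {x | ∏ i, |x - t i| < h ^ Fintype.card ι} with hA
  have hAfin : volume A ≠ ⊤ := ne_top_of_le_ne_top
    (isCompact_iUnion fun i => isCompact_closedBall (t i) h).measure_ne_top
    (measure_mono (setOf_prod_abs_sub_lt_subset t hh))
  rcases isEmpty_or_nonempty ι with hι | hι
  · simp [hA]
  have hpoint : ∀ᵐ x, x ∈ A →
      (Fintype.card ι : ENNReal) ≤ ∑ i, ENNReal.ofReal ((|x - t i| / h) ^ (-(1 / 2) : ℝ)) := by
    filter_upwards [(countable_range t).ae_notMem volume] with x hx hxA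
    have hne (i : ι) : 0 < |x - t i| := abs_pos.mpr (sub_ne_zero.mpr fun hi => hx ⟨i, hi.symm⟩)
    rw [← ENNReal.ofReal_sum_of_nonneg fun i _ => by positivity, ← ENNReal.ofReal_natCast]
    exact ENNReal.ofReal_le_ofReal (card_le_sum_div_rpow hne hh (by norm_num) (le_of_lt hxA))
  have hvol : volume A ≤ ENNReal.ofReal (√h * (4 * √(volume.real A))) := by
    have hcard : (Fintype.card ι : ENNReal) ≠ 0 := by simp
    refine (ENNReal.mul_le_mul_iff_right hcard (ENNReal.natCast_ne_top _)).mp ?_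
    calc (Fintype.card ι : ENNReal) * volume A
        ≤ ∫⁻ x in A, ∑ i, ENNReal.ofReal ((|x - t i| / h) ^ (-(1 / 2) : ℝ)) := by
          rw [← setLIntegral_const]
          exact setLIntegral_mono_ae (by fun_prop) hpoint
      _ ≤ ∑ _i : ι, ENNReal.ofReal (√h * (4 * √(volume.real A))) := by
          rw [lintegral_finsetSum _ fun i _ => by fun_prop]
          exact Finset.sum_le_sum fun i _ =>
            setLIntegral_abs_sub_div_rpow_neg_half_le hAfin (t i) hh.le
      _ = _ := by rw [Finset.sum_const, nsmul_eq_mul, Finset.card_univ]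
  rw [← ofReal_measureReal hAfin] at hvol ⊢
  have hreal := (ENNReal.ofReal_le_ofReal_iff (by positivity)).mp hvol
  rw [mul_left_comm, ← Real.sqrt_mul hh.le] at hreal
  refine ENNReal.ofReal_le_ofReal
    ((le_sq_mul_of_le_mul_sqrt_mul hh.le measureReal_nonneg hreal).trans_eq ?_)
  norm_num

lemma norm_eval_eq_leadingCoeff_mul_prod_roots (P : ℂ[X]) (y : ℂ) :
    ‖P.eval y‖ = ‖P.leadingCoeff‖ * (P.roots.map (dist y)).prod := by
  rw [(IsAlgClosed.splits P).eval_eq_prod_roots, norm_mul]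
  congr 1
  simpa [Multiset.map_map, Function.comp_def, dist_eq_norm] using
    map_multiset_prod (normHom : ℂ →*₀ ℝ) (P.roots.map (y - ·))

lemma norm_eval_eq_prod_roots {P : ℂ[X]} (hP : P.Monic) (y : ℂ) :
    ‖P.eval y‖ = (P.roots.map (dist y)).prod := by
  rw [norm_eval_eq_leadingCoeff_mul_prod_roots, hP.leadingCoeff, norm_one, one_mul]

lemma volume_norm_eval_lt_pow_natDegree_le {P : ℂ[X]} (hP : P.Monic) {h : ℝ} (hh : 0 < h) :
    volume {x : ℝ | ‖P.eval (x : ℂ)‖ < h ^ P.natDegree} ≤ ENNReal.ofReal (16 * h) := by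
  refine (measure_mono fun x hx => ?_).trans
    (volume_prod_abs_sub_lt_pow_card_le (fun z : P.roots => z.1.re) hh)
  rw [mem_ofPred_eq, Multiset.card_coe, ← (IsAlgClosed.splits P).natDegree_eq_card_roots]
  refine lt_of_le_of_lt ?_ hx
  rw [norm_eval_eq_prod_roots hP, Finset.prod_eq_multiset_prod,
    Multiset.map_univ P.roots fun z => |x - z.re|]
  refine Multiset.prod_map_le_prod_map₀ _ _ (fun _ _ => abs_nonneg _) fun z _ => ?_
  simpa [dist_eq_norm] using Complex.abs_re_le_norm (x - z)

/-! ### Splitting off the roots close to a point -/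

lemma exists_monic_mul_eq_roots_near {P : ℂ[X]} (hP : P ≠ 0) (c : ℂ) (ρ : ℝ) :
    ∃ A Q : ℂ[X], P = A * Q ∧ A.Monic ∧ (∀ z ∈ A.roots, dist c z < ρ) ∧
      ∀ z ∈ Q.roots, ρ ≤ dist c z := by
  classical
  let near : Multiset ℂ := P.roots.filter fun z => dist c z < ρ
  obtain ⟨Q, hQ⟩ := (Multiset.prod_X_sub_C_dvd_iff_le_roots hP near).mpr (Multiset.filter_le _ _)
  have hroots : P.roots = near + Q.roots := by
    conv_lhs => rw [hQ, roots_mul (hQ ▸ hP), roots_multiset_prod_X_sub_C]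
  refine ⟨_, Q, hQ, monic_multiset_prod_of_monic _ _ fun z _ => monic_X_sub_C z, ?_, ?_⟩
  · rw [roots_multiset_prod_X_sub_C]
    exact fun z hz => (Multiset.mem_filter.mp hz).2
  · have hfar : Q.roots = P.roots.filter fun z => ¬ dist c z < ρ :=
      add_left_cancel (hroots.symm.trans (Multiset.filter_add_not _ _).symm)
    intro z hz
    rw [hfar] at hz
    exact not_lt.mp (Multiset.mem_filter.mp hz).2

lemma norm_eval_le_pow_natDegree {P : ℂ[X]} (hP : P.Monic) {y : ℂ} {ρ : ℝ}
    (hroots : ∀ z ∈ P.roots, dist y z ≤ ρ) : ‖P.eval y‖ ≤ ρ ^ P.natDegree := by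
  rw [norm_eval_eq_prod_roots hP, (IsAlgClosed.splits P).natDegree_eq_card_roots,
    ← Multiset.prod_replicate, ← Multiset.map_const']
  exact Multiset.prod_map_le_prod_map₀ _ _ (fun _ _ => dist_nonneg) hroots

lemma pow_natDegree_le_norm_eval {P : ℂ[X]} (hP : P.Monic) {y : ℂ} {ρ : ℝ} (hρ : 0 ≤ ρ)
    (hroots : ∀ z ∈ P.roots, ρ ≤ dist y z) : ρ ^ P.natDegree ≤ ‖P.eval y‖ := by
  rw [norm_eval_eq_prod_roots hP, (IsAlgClosed.splits P).natDegree_eq_card_roots,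
    ← Multiset.prod_replicate, ← Multiset.map_const']
  exact Multiset.prod_map_le_prod_map₀ _ _ (fun _ _ => hρ) hroots

lemma one_sub_div_pow_mul_norm_eval_le {Q : ℂ[X]} {c y : ℂ} {δ ρ : ℝ} (hρ : 0 < ρ) (hδρ : δ ≤ ρ)
    (hroots : ∀ z ∈ Q.roots, ρ ≤ dist c z) (hy : dist y c ≤ δ) :
    (1 - δ / ρ) ^ Q.natDegree * ‖Q.eval c‖ ≤ ‖Q.eval y‖ := by
  have hκ : 0 ≤ 1 - δ / ρ := sub_nonneg.mpr (div_le_one_of_le₀ hδρ hρ.le)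
  have hfactor : ∀ z ∈ Q.roots, (1 - δ / ρ) * dist c z ≤ dist y z := by
    intro z hz
    have hδ : δ ≤ δ / ρ * dist c z := by
      rw [div_mul_eq_mul_div, le_div_iff₀ hρ]
      exact mul_le_mul_of_nonneg_left (hroots z hz) (dist_nonneg.trans hy)
    linarith [dist_triangle_left c z y]
  rw [norm_eval_eq_leadingCoeff_mul_prod_roots, norm_eval_eq_leadingCoeff_mul_prod_roots,
    (IsAlgClosed.splits Q).natDegree_eq_card_roots, mul_left_comm, ← Multiset.prod_replicate,
    ← Multiset.map_const', ← Multiset.prod_map_mul]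
  gcongr
  exact Multiset.prod_map_le_prod_map₀ _ _ (fun _ _ => by positivity) hfactor

/-- By the maximum principle for `Q`, which on the sphere is at most `M / (r - ρ) ^ deg A`. -/
lemma norm_eval_mul_le_of_roots_near {A Q : ℂ[X]} (hA : A.Monic) {c : ℂ} {ρ r M : ℝ} (hρ : 0 ≤ ρ)
    (hρr : ρ < r) (hroots : ∀ z ∈ A.roots, dist c z ≤ ρ)
    (hM : ∀ y ∈ sphere c r, ‖(A * Q).eval y‖ ≤ M) :
    ‖(A * Q).eval c‖ ≤ (ρ / (r - ρ)) ^ A.natDegree * M := by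
  have hr : 0 < r := hρ.trans_lt hρr
  have hpow : 0 < (r - ρ) ^ A.natDegree := pow_pos (sub_pos.mpr hρr) _
  have hsphere : ∀ y ∈ frontier (ball c r), ‖Q.eval y‖ ≤ M / (r - ρ) ^ A.natDegree := by
    intro y hy
    rw [frontier_ball c hr.ne'] at hy
    have hAy : (r - ρ) ^ A.natDegree ≤ ‖A.eval y‖ :=
      pow_natDegree_le_norm_eval hA (sub_nonneg.mpr hρr.le) fun z hz => by
        linarith [dist_triangle_right y c z, mem_sphere.mp hy, hroots z hz, dist_comm c z]
    rw [le_div_iff₀' hpow]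
    calc (r - ρ) ^ A.natDegree * ‖Q.eval y‖ ≤ ‖A.eval y‖ * ‖Q.eval y‖ := by gcongr
      _ = ‖(A * Q).eval y‖ := by rw [eval_mul, norm_mul]
      _ ≤ M := hM y hy
  have hQc : ‖Q.eval c‖ ≤ M / (r - ρ) ^ A.natDegree :=
    Complex.norm_le_of_forall_mem_frontier_norm_le isBounded_ball
      Q.differentiable.diffContOnCl hsphere (subset_closure (mem_ball_self hr))
  calc ‖(A * Q).eval c‖ = ‖A.eval c‖ * ‖Q.eval c‖ := by rw [eval_mul, norm_mul]
    _ ≤ ρ ^ A.natDegree * (M / (r - ρ) ^ A.natDegree) := by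
        gcongr; exact norm_eval_le_pow_natDegree hA hroots
    _ = _ := by rw [div_pow]; ring

lemma volume_norm_eval_mul_lt_le {A Q : ℂ[X]} (hA : A.Monic) {x₀ δ ρ h : ℝ} (hρ : 0 < ρ)
    (hδρ : δ ≤ ρ) (hh : 0 < h) (hnear : ∀ z ∈ A.roots, dist (x₀ : ℂ) z ≤ ρ)
    (hfar : ∀ z ∈ Q.roots, ρ ≤ dist (x₀ : ℂ) z) :
    volume {x ∈ closedBall x₀ δ | ‖(A * Q).eval (x : ℂ)‖
        < (1 - δ / ρ) ^ Q.natDegree * (h / ρ) ^ A.natDegree * ‖(A * Q).eval (x₀ : ℂ)‖}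
      ≤ ENNReal.ofReal (16 * h) := by
  refine (measure_mono ?_).trans (volume_norm_eval_lt_pow_natDegree_le hA hh)
  rintro x ⟨hx, hlt⟩
  by_contra! hle
  refine hlt.not_ge ?_
  have hκ : 0 ≤ 1 - δ / ρ := sub_nonneg.mpr (div_le_one_of_le₀ hδρ hρ.le)
  calc (1 - δ / ρ) ^ Q.natDegree * (h / ρ) ^ A.natDegree * ‖(A * Q).eval (x₀ : ℂ)‖
      = (h / ρ) ^ A.natDegree * ‖A.eval (x₀ : ℂ)‖
          * ((1 - δ / ρ) ^ Q.natDegree * ‖Q.eval (x₀ : ℂ)‖) := by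
        rw [eval_mul, norm_mul]; ring
    _ ≤ (h / ρ) ^ A.natDegree * ρ ^ A.natDegree * ‖Q.eval (x : ℂ)‖ := by
        gcongr
        · exact norm_eval_le_pow_natDegree hA hnear
        · exact one_sub_div_pow_mul_norm_eval_le hρ hδρ hfar
            ((Complex.isometry_ofReal.dist_eq x x₀).trans_le hx)
    _ ≤ ‖A.eval (x : ℂ)‖ * ‖Q.eval (x : ℂ)‖ := by
        rw [← mul_pow, div_mul_cancel₀ _ hρ.ne']
        gcongr
        simpa using hle
    _ = ‖(A * Q).eval (x : ℂ)‖ := by rw [eval_mul, norm_mul]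

/-! ### Sublevel sets of polynomials of exponential size -/

lemma exists_forall_div_div_sub_le_sqrt {κ r : ℝ} (hκ : 0 < κ) (hr : 0 < r) :
    ∃ δ₀ > 0, ∀ δ ∈ Ioc 0 δ₀, δ / κ < r ∧ δ / κ / (r - δ / κ) ≤ √δ := by
  refine ⟨min 1 ((κ * r / 4) ^ 2), by positivity, fun δ hδ => ?_⟩
  have hsqrt_pos : 0 < √δ := Real.sqrt_pos.mpr hδ.1
  have hsqrt_le : √δ ≤ κ * r / 4 :=
    (Real.sqrt_le_left (by positivity)).mpr (hδ.2.trans (min_le_right _ _))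
  have hsqrt_one : √δ ≤ 1 := Real.sqrt_le_one.mpr (hδ.2.trans (min_le_left _ _))
  have hdiv : δ / κ ≤ √δ * (r / 4) := by
    rw [div_le_iff₀ hκ]
    nlinarith [Real.sq_sqrt hδ.1.le]
  have hlt : δ / κ ≤ r / 4 := hdiv.trans (by nlinarith)
  refine ⟨by linarith, ?_⟩
  rw [div_le_iff₀ (by linarith)]
  nlinarith

lemma exp_neg_le_pow_natDegree_of_roots_near {A Q : ℂ[X]} (hA : A.Monic) {c : ℂ} {ρ r a b : ℝ}
    (hρ : 0 ≤ ρ) (hρr : ρ < r) (hroots : ∀ z ∈ A.roots, dist c z ≤ ρ)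
    (hM : ∀ y ∈ sphere c r, ‖(A * Q).eval y‖ ≤ Real.exp a)
    (hc : Real.exp (-b) ≤ ‖(A * Q).eval c‖) :
    Real.exp (-(a + b)) ≤ (ρ / (r - ρ)) ^ A.natDegree := by
  have := hc.trans (norm_eval_mul_le_of_roots_near hA hρ hρr hroots hM)
  rwa [← div_le_iff₀ (Real.exp_pos a), ← Real.exp_sub, neg_sub_left] at this

lemma volume_norm_eval_mul_lt_exp_le {A Q : ℂ[X]} (hA : A.Monic) {x₀ δ κ a b c : ℝ} {n : ℕ}
    (T : ℕ) (hδ : 0 < δ) (hδκ : 16 * δ ≤ κ) (hκ1 : κ ≤ 1) (hκ : Real.exp (-a) ≤ (1 - κ) ^ n)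
    (hnear : ∀ z ∈ A.roots, dist (x₀ : ℂ) z ≤ δ / κ)
    (hfar : ∀ z ∈ Q.roots, δ / κ ≤ dist (x₀ : ℂ) z) (hQ : Q.natDegree ≤ n)
    (hfew : Real.exp (-b) ≤ √δ ^ A.natDegree) (hx₀ : Real.exp (-c) ≤ ‖(A * Q).eval (x₀ : ℂ)‖) :
    volume {x ∈ closedBall x₀ δ | ‖(A * Q).eval (x : ℂ)‖ < Real.exp (-(a + 2 * T * b + c))}
      ≤ ENNReal.ofReal (δ ^ T) := by
  have hκpos : 0 < κ := by linarith
  have hh : δ ^ T ≤ δ ^ T / 16 / (δ / κ) := by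
    have hρ : δ / κ ≤ 1 / 16 := (div_le_iff₀ hκpos).mpr (by linarith)
    rw [le_div_iff₀ (by positivity), div_eq_mul_one_div (δ ^ T) 16]
    exact mul_le_mul_of_nonneg_left hρ (by positivity)
  have hpow : Real.exp (-(2 * T * b)) ≤ (δ ^ T / 16 / (δ / κ)) ^ A.natDegree := by
    calc Real.exp (-(2 * T * b)) = Real.exp (-b) ^ (2 * T) := by
          rw [← Real.exp_nat_mul]; push_cast; ring_nf
      _ ≤ (√δ ^ A.natDegree) ^ (2 * T) := by gcongr
      _ = (δ ^ T) ^ A.natDegree := by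
          rw [pow_right_comm, pow_mul, Real.sq_sqrt hδ.le]
      _ ≤ _ := by gcongr
  have hbound : Real.exp (-(a + 2 * T * b + c)) ≤ (1 - δ / (δ / κ)) ^ Q.natDegree
      * (δ ^ T / 16 / (δ / κ)) ^ A.natDegree * ‖(A * Q).eval (x₀ : ℂ)‖ := by
    rw [div_div_cancel₀ hδ.ne', neg_add, neg_add, Real.exp_add, Real.exp_add]
    have hfactor := pow_le_pow_of_le_one (sub_nonneg.mpr hκ1) (by linarith) hQ
    gcongr
    exact hκ.trans hfactor
  refine (measure_mono fun x hx => And.intro hx.1 (hx.2.trans_le hbound)).trans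
    ((volume_norm_eval_mul_lt_le hA (div_pos hδ hκpos) ?_ (by positivity) hnear hfar).trans_eq ?_)
  · exact (le_div_iff₀ hκpos).mpr (mul_le_of_le_one_right hδ.le hκ1)
  · rw [mul_div_cancel₀ _ (by norm_num)]

/-- The roots of `P` within `δ / κ` of `x₀` are so few that they contribute a factor
`exp (-O(ε * n))` only, and the other roots one of `(1 - κ) ^ n`. -/
lemma exists_volume_norm_eval_lt_exp_le {γ : ℝ} (hγ : 0 < γ) (T : ℕ) :
    ∃ ε > 0, ∃ δ₀ > 0, ∀ (n : ℕ) (P : ℂ[X]), P.natDegree ≤ n →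
      (∀ x ∈ Icc (-1 : ℝ) 1, ‖P.eval (x : ℂ)‖ ≤ Real.exp (ε * n)) →
      ∀ x₀ ∈ Icc (-1 : ℝ) 1, Real.exp (-(ε * n)) ≤ ‖P.eval (x₀ : ℂ)‖ → ∀ δ ∈ Ioc 0 δ₀,
        volume {x ∈ closedBall x₀ δ | ‖P.eval (x : ℂ)‖ < Real.exp (-(γ * n))}
          ≤ ENNReal.ofReal (δ ^ T) := by
  obtain ⟨ε, hε, hεγ⟩ : ∃ ε > 0, (6 * T + 1) * ε = γ / 2 :=
    ⟨γ / 2 / (6 * T + 1), by positivity, by field_simp⟩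
  have hκ : 0 < 1 - Real.exp (-(γ / 2)) := by simpa using hγ
  set κ := 1 - Real.exp (-(γ / 2)) with hκ_def
  obtain ⟨r, hr, hgrowth⟩ := exists_norm_eval_le_mul_exp hε
  obtain ⟨δ₁, hδ₁, hsqrt⟩ := exists_forall_div_div_sub_le_sqrt hκ hr
  refine ⟨ε, hε, min δ₁ (κ / 16), by positivity, fun n P hPn hPle x₀ hx₀ hPx₀ δ hδ => ?_⟩
  have hδκ : δ ≤ κ / 16 := hδ.2.trans (min_le_right _ _)
  obtain ⟨hρr, hρsqrt⟩ := hsqrt δ ⟨hδ.1, hδ.2.trans (min_le_left _ _)⟩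
  have hρ : 0 ≤ δ / κ := div_nonneg hδ.1.le hκ.le
  have hP0 : P ≠ 0 := by
    rintro rfl
    simpa using (Real.exp_pos _).trans_le hPx₀
  obtain ⟨A, Q, rfl, hA, hnear, hfar⟩ := exists_monic_mul_eq_roots_near hP0 x₀ (δ / κ)
  have hQn : Q.natDegree ≤ n := by
    have := hA.natDegree_mul' (right_ne_zero_of_mul hP0)
    omega
  have hsphere : ∀ y ∈ sphere (x₀ : ℂ) r, ‖(A * Q).eval y‖ ≤ Real.exp (2 * ε * n) := by
    intro y hy
    refine (hgrowth _ _ hPle x₀ hx₀ y (mem_sphere.mp hy).le).trans ?_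
    rw [mul_assoc, two_mul, Real.exp_add]
    gcongr
  have hfew : Real.exp (-(2 * ε * n + ε * n)) ≤ √δ ^ A.natDegree :=
    (exp_neg_le_pow_natDegree_of_roots_near hA hρ hρr (fun z hz => (hnear z hz).le) hsphere
      hPx₀).trans (pow_le_pow_left₀ (div_nonneg hρ (sub_pos.mpr hρr).le) hρsqrt _)
  have hκn : Real.exp (-(n * (γ / 2))) ≤ (1 - κ) ^ n := by
    rw [hκ_def, sub_sub_cancel, ← Real.exp_nat_mul, mul_neg]
  rw [show γ * n = n * (γ / 2) + 2 * T * (2 * ε * n + ε * n) + ε * n by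
    linear_combination (-n : ℝ) * hεγ]
  exact volume_norm_eval_mul_lt_exp_le hA T hδ.1 (by linarith)
    (by linarith [Real.exp_pos (-(γ / 2))]) hκn (fun z hz => (hnear z hz).le) hfar hQn hfew hPx₀

/-! ### Sublevel sets of a continuous function -/

/-- The set whose Lebesgue measure is `mf f t`. -/
def sublevelSet (f : ℝ → ℝ) (t : ℝ) : Set ℝ := {x ∈ Icc (-1 : ℝ) 1 | |f x| ≤ t}

section ContinuousOn

variable {f : ℝ → ℝ}

lemma mf_eq_measureReal_sublevelSet (f : ℝ → ℝ) (t : ℝ) : mf f t = volume.real (sublevelSet f t) :=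
  rfl

lemma sublevelSet_subset_Icc (f : ℝ → ℝ) (t : ℝ) : sublevelSet f t ⊆ Icc (-1) 1 :=
  sep_subset _ _

lemma volume_sublevelSet_ne_top (f : ℝ → ℝ) (t : ℝ) : volume (sublevelSet f t) ≠ ⊤ :=
  measure_ne_top_of_subset (sublevelSet_subset_Icc f t) measure_Icc_lt_top.ne

lemma sublevelSet_mono (f : ℝ → ℝ) : Monotone (sublevelSet f) :=
  fun _ _ hst _ hx => ⟨hx.1, hx.2.trans hst⟩

lemma isClosed_sublevelSet (hf : ContinuousOn f (Icc (-1) 1)) (t : ℝ) :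
    IsClosed (sublevelSet f t) :=
  isClosed_Icc.isClosed_le hf.abs continuousOn_const

lemma exp_neg_le_Estar (f : ℝ → ℝ) (n : ℕ) : Real.exp (-(n : ℝ)) ≤ Estar f n :=
  le_max_right _ _

lemma Estar_pos (f : ℝ → ℝ) (n : ℕ) : 0 < Estar f n :=
  (Real.exp_pos _).trans_le (exp_neg_le_Estar f n)

lemma exists_polynomial_abs_sub_le_two_mul_Estar (hf : ContinuousOn f (Icc (-1) 1)) (n : ℕ) :
    ∃ P : ℝ[X], P.natDegree ≤ n ∧ ∀ x ∈ Icc (-1 : ℝ) 1, |f x - P.eval x| ≤ 2 * Estar f n := by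
  obtain ⟨_, ⟨P, hP, rfl⟩, hlt⟩ := exists_lt_of_csInf_lt (Set.Nonempty.image _ ⟨0, by simp⟩)
    (show En f n < En f n + Real.exp (-(n : ℝ)) by linarith [Real.exp_pos (-(n : ℝ))])
  refine ⟨P, hP, fun x hx => ?_⟩
  have hbdd : BddAbove ((fun x => |f x - P.eval x|) '' Icc (-1 : ℝ) 1) :=
    (isCompact_Icc.image_of_continuousOn (hf.sub P.continuous.continuousOn).abs).bddAbove
  calc |f x - P.eval x| ≤ En f n + Real.exp (-(n : ℝ)) :=
        (le_csSup hbdd (mem_image_of_mem _ hx)).trans hlt.le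
    _ ≤ Estar f n + Estar f n := add_le_add (le_max_left _ _) (le_max_right _ _)
    _ = 2 * Estar f n := (two_mul _).symm

lemma norm_eval_map_ofReal (P : ℝ[X]) (x : ℝ) :
    ‖(P.map (algebraMap ℝ ℂ)).eval (x : ℂ)‖ = |P.eval x| := by
  rw [← Complex.coe_algebraMap, eval_map_apply, Complex.coe_algebraMap, Complex.norm_real,
    Real.norm_eq_abs]

lemma eventually_lt_exp_mul_natCast {ε : ℝ} (hε : 0 < ε) (C : ℝ) :
    ∀ᶠ n : ℕ in atTop, C < Real.exp (ε * n) :=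
  (Real.tendsto_exp_atTop.comp
    (tendsto_natCast_atTop_atTop.const_mul_atTop hε)).eventually_gt_atTop C

lemma exists_eventually_volume_sublevelSet_inter_closedBall_le (hf : ContinuousOn f (Icc (-1) 1))
    {γ : ℝ} (hγ : 0 < γ) (T : ℕ) :
    ∃ ε > 0, ∃ δ₀ > 0, ∀ᶠ n : ℕ in atTop, Estar f n ≤ Real.exp (-(γ * n)) →
      ∀ x₀ ∈ Icc (-1 : ℝ) 1, Real.exp (-(ε * n)) ≤ |f x₀| → ∀ δ ∈ Ioc 0 δ₀,
        volume (sublevelSet f (Estar f n) ∩ closedBall x₀ δ) ≤ ENNReal.ofReal (δ ^ T) := by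
  obtain ⟨M, hM⟩ := isCompact_Icc.exists_bound_of_continuousOn hf
  obtain ⟨ε', hε', δ₀, hδ₀, hP_vol⟩ := exists_volume_norm_eval_lt_exp_le (half_pos hγ) T
  obtain ⟨ε, hε, hεε', hεγ⟩ : ∃ ε > 0, 2 * ε ≤ ε' ∧ 2 * ε ≤ γ :=
    ⟨min ε' γ / 2, by positivity, by linarith [min_le_left ε' γ], by linarith [min_le_right ε' γ]⟩
  refine ⟨ε, hε, δ₀, hδ₀, ?_⟩
  filter_upwards [eventually_lt_exp_mul_natCast hε' (M + 2), eventually_lt_exp_mul_natCast hε 3]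
    with n hn_bound hn_three hE x₀ hx₀ hfx₀ δ hδ
  obtain ⟨P, hPn, hP⟩ := exists_polynomial_abs_sub_le_two_mul_Estar hf n
  have : (0 : ℝ) ≤ n := n.cast_nonneg
  have hE_one : Estar f n ≤ 1 := hE.trans (Real.exp_le_one_iff.mpr (neg_nonpos.mpr (by positivity)))
  have hthree : ∀ {a b : ℝ}, b + ε ≤ a → 3 * Real.exp (-(a * n)) < Real.exp (-(b * n)) := by
    intro a b hab
    calc 3 * Real.exp (-(a * n)) < Real.exp (ε * n) * Real.exp (-(a * n)) := by gcongr
      _ ≤ Real.exp (-(b * n)) := by rw [← Real.exp_add]; gcongr; nlinarith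
  have hPx (x) (hx : x ∈ Icc (-1 : ℝ) 1) : |P.eval x| ≤ |f x| + 2 * Estar f n := by
    linarith [hP x hx, abs_sub_abs_le_abs_sub (P.eval x) (f x), abs_sub_comm (P.eval x) (f x)]
  have hfx (x) (hx : x ∈ Icc (-1 : ℝ) 1) : |f x| ≤ |P.eval x| + 2 * Estar f n := by
    linarith [hP x hx, abs_sub_abs_le_abs_sub (f x) (P.eval x)]
  refine (measure_mono ?_).trans
    (hP_vol n (P.map (algebraMap ℝ ℂ)) (natDegree_map_le.trans hPn) ?_ x₀ hx₀ ?_ δ hδ)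
  · rintro x ⟨⟨hx, hxE⟩, hxδ⟩
    refine ⟨hxδ, ?_⟩
    rw [norm_eval_map_ofReal]
    linarith [hPx x hx, hthree (a := γ) (b := γ / 2) (by linarith)]
  · intro x hx
    rw [norm_eval_map_ofReal]
    linarith [hPx x hx, hM x hx, Real.norm_eq_abs (f x)]
  · rw [norm_eval_map_ofReal]
    have hγε : Real.exp (-(γ * n)) ≤ Real.exp (-(2 * ε * n)) := by gcongr
    have hε'ε : Real.exp (-(ε' * n)) ≤ Real.exp (-(2 * ε * n)) := by gcongr
    linarith [hfx x₀ hx₀, hthree (a := 2 * ε) (b := ε) (by linarith)]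

end ContinuousOn

/-! ### Sets that are thin near the points of their complement -/

lemma measure_le_mul_of_forall_closedBall_le (μ : Measure ℝ) {A : Set ℝ} {a b ρ : ℝ} {c : ENNReal}
    (hρ : 0 < ρ) (hA : A ⊆ Icc a b)
    (hball : ∀ y ∈ Icc a b, ∃ x, dist y x ≤ ρ ∧ μ (A ∩ closedBall x (2 * ρ)) ≤ c) :
    μ A ≤ (⌊(b - a) / ρ⌋₊ + 1 : ℕ) * c := by
  rcases A.eq_empty_or_nonempty with rfl | hne
  · simp
  have hab : a ≤ b := nonempty_Icc.mp (hne.mono hA)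
  have hgrid : ∀ i ∈ Finset.range (⌊(b - a) / ρ⌋₊ + 1), a + i * ρ ∈ Icc a b := by
    intro i hi
    have hib := (Nat.le_floor_iff (div_nonneg (sub_nonneg.mpr hab) hρ.le)).mp
      (Finset.mem_range_succ_iff.mp hi)
    rw [le_div_iff₀ hρ] at hib
    exact ⟨by nlinarith [i.cast_nonneg (α := ℝ)], by linarith⟩
  choose! x hx using hball
  have hcover : A ⊆ ⋃ i ∈ Finset.range (⌊(b - a) / ρ⌋₊ + 1),
      A ∩ closedBall (x (a + i * ρ)) (2 * ρ) := by
    intro y hy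
    obtain ⟨hay, hyb⟩ := hA hy
    have hi : ⌊(y - a) / ρ⌋₊ ∈ Finset.range (⌊(b - a) / ρ⌋₊ + 1) :=
      Finset.mem_range_succ_iff.mpr (by gcongr)
    have hle := Nat.floor_le (div_nonneg (sub_nonneg.mpr hay) hρ.le)
    have hlt := Nat.lt_floor_add_one ((y - a) / ρ)
    rw [le_div_iff₀ hρ] at hle
    rw [div_lt_iff₀ hρ] at hlt
    have hdist : dist y (a + ⌊(y - a) / ρ⌋₊ * ρ) ≤ ρ := by
      rw [Real.dist_eq, abs_of_nonneg (by linarith)]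
      linarith
    refine mem_iUnion₂.mpr ⟨_, hi, hy, mem_closedBall.mpr ?_⟩
    linarith [dist_triangle y (a + ⌊(y - a) / ρ⌋₊ * ρ) (x (a + ⌊(y - a) / ρ⌋₊ * ρ)),
      (hx _ (hgrid _ hi)).1]
  calc μ A ≤ ∑ i ∈ Finset.range (⌊(b - a) / ρ⌋₊ + 1), μ (A ∩ closedBall (x (a + i * ρ)) (2 * ρ)) :=
        (measure_mono hcover).trans (measure_biUnion_finset_le _ _)
    _ ≤ (Finset.range (⌊(b - a) / ρ⌋₊ + 1)).card • c :=
        Finset.sum_le_card_nsmul _ _ _ fun i hi => (hx _ (hgrid i hi)).2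
    _ = _ := by rw [Finset.card_range, nsmul_eq_mul]

lemma ofReal_le_volume_Icc_inter_closedBall {a b y ρ : ℝ} (hy : y ∈ Icc a b) (hρ : 0 ≤ ρ)
    (hρab : ρ ≤ b - a) : ENNReal.ofReal ρ ≤ volume (Icc a b ∩ closedBall y ρ) := by
  rw [Real.closedBall_eq_Icc, Icc_inter_Icc, Real.volume_Icc]
  refine ENNReal.ofReal_le_ofReal ?_
  rw [le_sub_iff_add_le, le_min_iff, ← le_sub_iff_add_le', sup_le_iff, ← le_sub_iff_add_le',
    sup_le_iff]
  exact ⟨⟨by linarith, by linarith [hy.2]⟩, by linarith [hy.1], by linarith⟩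

/-- By connectedness it suffices to exclude boundary points of the thickening, next to which `Z`
would contain an interval. -/
lemma Icc_subset_thickening_diff {Z : Set ℝ} {a b ρ : ℝ} (hρ : 0 < ρ) (hρab : ρ ≤ 2 * (b - a))
    (hne : (Icc a b \ Z).Nonempty)
    (hsmall : ∀ x ∈ Icc a b \ Z, volume (Z ∩ closedBall x (3 * ρ)) < ENNReal.ofReal (ρ / 2)) :
    Icc a b ⊆ thickening ρ (Icc a b \ Z) := by
  refine isPreconnected_Icc.subset_of_closure_inter_subset isOpen_thickening ?_ ?_
  · obtain ⟨x, hx⟩ := hne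
    exact ⟨x, hx.1, self_subset_thickening hρ _ hx⟩
  · rintro y ⟨hy_cl, hy⟩
    by_contra hy_far
    obtain ⟨v, hv, hyv⟩ := Metric.mem_closure_iff.mp hy_cl ρ hρ
    obtain ⟨u, hu, hvu⟩ := mem_thickening_iff.mp hv
    refine ((ofReal_le_volume_Icc_inter_closedBall hy (half_pos hρ).le (by linarith)).trans
      (measure_mono ?_)).not_gt (hsmall u hu)
    rintro z ⟨hz, hzy⟩
    rw [mem_closedBall] at hzy
    refine ⟨?_, mem_closedBall.mpr ?_⟩
    · by_contra hzZ
      refine hy_far (mem_thickening_iff.mpr ⟨z, ⟨hz, hzZ⟩, ?_⟩)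
      rw [dist_comm]
      linarith
    · linarith [dist_triangle4 z y v u]

lemma volume_eq_zero_of_volume_inter_closedBall_le_sq {Z : Set ℝ} {a b δ₀ : ℝ} (hab : a < b)
    (hZ : Z ⊆ Icc a b) (hne : (Icc a b \ Z).Nonempty) (hδ₀ : 0 < δ₀)
    (hsmall : ∀ x ∈ Icc a b \ Z, ∀ δ ∈ Ioc 0 δ₀,
      volume (Z ∩ closedBall x δ) ≤ ENNReal.ofReal (δ ^ 2)) :
    volume Z = 0 := by
  have hbound : ∀ᶠ ρ in 𝓝[>] (0 : ℝ), volume Z ≤ ENNReal.ofReal (4 * (b - a + ρ) * ρ) := by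
    have hρ₀ : 0 < min (min (1 / 18) (b - a)) (δ₀ / 3) := by
      have := sub_pos.mpr hab
      positivity
    filter_upwards [Ioo_mem_nhdsGT hρ₀] with ρ ⟨hρ, hρ_lt⟩
    simp only [lt_min_iff] at hρ_lt
    obtain ⟨⟨hρ1, hρab⟩, hρδ₀⟩ := hρ_lt
    have hdense := Icc_subset_thickening_diff hρ (by linarith) hne fun x hx =>
      (hsmall x hx (3 * ρ) ⟨by positivity, by linarith⟩).trans_lt
        ((ENNReal.ofReal_lt_ofReal_iff (by positivity)).mpr (by nlinarith))
    refine (measure_le_mul_of_forall_closedBall_le volume hρ hZ (c := ENNReal.ofReal ((2 * ρ) ^ 2))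
      fun y hy => ?_).trans ?_
    · obtain ⟨x, hx, hyx⟩ := mem_thickening_iff.mp (hdense hy)
      exact ⟨x, hyx.le, hsmall x hx _ ⟨by positivity, by linarith⟩⟩
    · rw [← ENNReal.ofReal_natCast, ← ENNReal.ofReal_mul (by positivity)]
      refine ENNReal.ofReal_le_ofReal ?_
      have hfloor := Nat.floor_le (div_nonneg (sub_nonneg.mpr hab.le) hρ.le)
      rw [le_div_iff₀ hρ] at hfloor
      push_cast
      nlinarith
  refine le_antisymm (ge_of_tendsto ?_ hbound) zero_le
  have hcont : Continuous fun ρ : ℝ => ENNReal.ofReal (4 * (b - a + ρ) * ρ) :=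
    ENNReal.continuous_ofReal.comp (by fun_prop)
  simpa using (hcont.tendsto 0).mono_left nhdsWithin_le_nhds

/-! ### Level sets at the approximation error -/

section ContinuousOn

variable {f : ℝ → ℝ}

lemma volume_sublevelSet_zero (hf : ContinuousOn f (Icc (-1) 1))
    (hf0 : ∃ x ∈ Icc (-1 : ℝ) 1, f x ≠ 0) {γ : ℝ} (hγ : 0 < γ)
    (hE : ∃ᶠ n : ℕ in atTop, Estar f n ≤ Real.exp (-(γ * n))) : volume (sublevelSet f 0) = 0 := by
  obtain ⟨ε, hε, δ₀, hδ₀, hlocal⟩ :=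
    exists_eventually_volume_sublevelSet_inter_closedBall_le hf hγ 2
  refine volume_eq_zero_of_volume_inter_closedBall_le_sq (by norm_num) (sublevelSet_subset_Icc f 0)
    (hf0.imp fun x hx => ⟨hx.1, fun h => hx.2 (abs_nonpos_iff.mp h.2)⟩) hδ₀ ?_
  rintro x ⟨hx, hfx⟩ δ hδ
  have hfx_pos : 0 < |f x| := not_le.mp fun h => hfx ⟨hx, h⟩
  obtain ⟨n, hEn, hn, hn_exp⟩ := (hE.and_eventually
    (hlocal.and (eventually_lt_exp_mul_natCast hε |f x|⁻¹))).exists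
  refine (measure_mono ?_).trans (hn hEn x hx ?_ δ hδ)
  · exact inter_subset_inter_left _ (sublevelSet_mono f (Estar_pos f n).le)
  · rw [Real.exp_neg]
    exact inv_le_of_inv_le₀ hfx_pos hn_exp.le

lemma tendsto_mf_nhdsGT (hf : ContinuousOn f (Icc (-1) 1)) (t : ℝ) :
    Tendsto (mf f) (𝓝[>] t) (𝓝 (mf f t)) := by
  have hInter : ⋂ s > t, sublevelSet f s = sublevelSet f t := by
    refine subset_antisymm (fun x hx => ?_) (subset_iInter₂ fun s hs => sublevelSet_mono f hs.le)
    simp only [mem_iInter₂] at hx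
    exact ⟨(hx (t + 1) (lt_add_one t)).1, le_of_forall_gt_imp_ge_of_dense fun s hs => (hx s hs).2⟩
  refine (ENNReal.tendsto_toReal (volume_sublevelSet_ne_top f t)).comp ?_
  have := tendsto_measure_biInter_gt (μ := volume) (s := sublevelSet f)
    (fun s _ => (isClosed_sublevelSet hf s).nullMeasurableSet)
    (fun _ _ _ hst => sublevelSet_mono f hst)
    ⟨t + 1, lt_add_one t, volume_sublevelSet_ne_top f (t + 1)⟩
  rwa [hInter] at this

lemma tendsto_mf_Estar_zero (hf : ContinuousOn f (Icc (-1) 1))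
    (hf0 : ∃ x ∈ Icc (-1 : ℝ) 1, f x ≠ 0) {γ : ℝ} (hγ : 0 < γ) {n : ℕ → ℕ}
    (hn : Tendsto n atTop atTop) (hE : ∀ j, Estar f (n j) ≤ Real.exp (-(γ * n j))) :
    Tendsto (fun j => mf f (Estar f (n j))) atTop (𝓝 0) := by
  have hexp : Tendsto (fun j => Real.exp (-(γ * n j))) atTop (𝓝 0) :=
    Real.tendsto_exp_neg_atTop_nhds_zero.comp
      ((tendsto_natCast_atTop_atTop.comp hn).const_mul_atTop hγ)
  have hEstar : Tendsto (fun j => Estar f (n j)) atTop (𝓝[>] 0) :=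
    tendsto_nhdsWithin_iff.mpr
      ⟨squeeze_zero (fun j => (Estar_pos f _).le) hE hexp, .of_forall fun j => Estar_pos f _⟩
  have hzero : mf f 0 = 0 := by
    rw [mf_eq_measureReal_sublevelSet, measureReal_def, volume_sublevelSet_zero hf hf0 hγ
      (hn.frequently (Frequently.of_forall hE)), ENNReal.toReal_zero]
  simpa only [hzero, Function.comp_def] using (tendsto_mf_nhdsGT hf 0).comp hEstar

lemma exists_dist_le_and_lt_abs_of_mf_lt {t ρ : ℝ} (hρ : ρ ≤ 2) (hmf : mf f t < ρ) {y : ℝ}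
    (hy : y ∈ Icc (-1 : ℝ) 1) : ∃ x ∈ Icc (-1 : ℝ) 1, dist y x ≤ ρ ∧ t < |f x| := by
  by_contra! hle
  have hsub : Icc (-1) 1 ∩ closedBall y ρ ⊆ sublevelSet f t := fun x hx =>
    ⟨hx.1, hle x hx.1 ((dist_comm y x).trans_le hx.2)⟩
  have hρ_pos : 0 < ρ := ENNReal.toReal_nonneg.trans_lt hmf
  refine hmf.not_ge ((ENNReal.ofReal_le_iff_le_toReal (volume_sublevelSet_ne_top f t)).mp ?_)
  exact (ofReal_le_volume_Icc_inter_closedBall hy hρ_pos.le (by linarith)).trans (measure_mono hsub)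

/-- Every interval of length `2 * m`, `m = mf f (Estar f k)`, contains a point where
`|f| > exp (-k)`. There are about `1 / m` balls of radius `4 * m` around such points to sum over. -/
lemma exists_eventually_mf_Estar_le_pow (hf : ContinuousOn f (Icc (-1) 1)) {γ : ℝ} (hγ : 0 < γ)
    (K : ℕ) :
    ∃ ε > (0 : ℝ), ∃ η > (0 : ℝ), ∀ᶠ n : ℕ in atTop, Estar f n ≤ Real.exp (-(γ * n)) →
      ∀ k : ℕ, k ≤ ε * n → mf f (Estar f k) ∈ Ioc 0 η →
        mf f (Estar f n) ≤ mf f (Estar f k) ^ K := by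
  obtain ⟨ε, hε, δ₀, hδ₀, hlocal⟩ :=
    exists_eventually_volume_sublevelSet_inter_closedBall_le hf hγ (K + 2)
  refine ⟨ε, hε, min (δ₀ / 4) (1 / (2 * 4 ^ (K + 2))), by positivity, ?_⟩
  filter_upwards [hlocal] with n hn hE k hk hm
  set m := mf f (Estar f k)
  obtain ⟨hm_pos, hm_le⟩ := hm
  have hmδ₀ : 2 * (2 * m) ≤ δ₀ := by linarith [hm_le.trans (min_le_left _ _)]
  have hmK : m * (2 * 4 ^ (K + 2)) ≤ 1 :=
    (le_div_iff₀ (by positivity)).mp (hm_le.trans (min_le_right _ _))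
  have hm_one : 2 * m ≤ 1 := by
    have : (1 : ℝ) ≤ 4 ^ (K + 2) := one_le_pow₀ (by norm_num)
    nlinarith
  have hcover := measure_le_mul_of_forall_closedBall_le volume (ρ := 2 * m) (by positivity)
    (sublevelSet_subset_Icc f (Estar f n)) (c := ENNReal.ofReal ((2 * (2 * m)) ^ (K + 2)))
    fun y hy => by
      obtain ⟨x, hx, hyx, hfx⟩ := exists_dist_le_and_lt_abs_of_mf_lt (t := Estar f k)
        (by linarith) (show m < 2 * m by linarith) hy
      refine ⟨x, hyx, hn hE x hx ?_ _ ⟨by positivity, hmδ₀⟩⟩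
      exact (Real.exp_le_exp.mpr (neg_le_neg hk)).trans ((exp_neg_le_Estar f k).trans hfx.le)
  rw [← ENNReal.ofReal_natCast, ← ENNReal.ofReal_mul (by positivity)] at hcover
  have hfloor := Nat.floor_le (a := (1 - -1) / (2 * m)) (by positivity)
  calc mf f (Estar f n) ≤ (⌊(1 - -1) / (2 * m)⌋₊ + 1 : ℕ) * (2 * (2 * m)) ^ (K + 2) :=
        ENNReal.toReal_le_of_le_ofReal (by positivity) hcover
    _ ≤ 2 / m * (2 * (2 * m)) ^ (K + 2) := by
        gcongr
        push_cast
        have : 1 ≤ 1 / m := (one_le_div hm_pos).mpr (by linarith)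
        have : (1 - -1) / (2 * m) = 1 / m := by field_simp; norm_num
        have : 2 / m = 2 * (1 / m) := by ring
        linarith
    _ = m * (2 * 4 ^ (K + 2)) * m ^ K := by field_simp; ring
    _ ≤ m ^ K := mul_le_of_le_one_left (by positivity) hmK

end ContinuousOn

/-! ### Sequences that decay faster than every power of the preceding term -/

lemma tendsto_div_natCast_atTop_of_tendsto_sub {a : ℕ → ℝ}
    (ha : Tendsto (fun j => a (j + 1) - a j) atTop atTop) :
    Tendsto (fun j => a j / j) atTop atTop := by
  refine tendsto_atTop.mpr fun C => ?_
  obtain ⟨N, hN⟩ := eventually_atTop.mp (ha.eventually_ge_atTop (C + 1))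
  have hlinear (j : ℕ) (hj : N ≤ j) : a N + (C + 1) * (j - N) ≤ a j := by
    induction j, hj using Nat.le_induction with
    | base => simp
    | succ j hj ih => push_cast; linarith [hN j hj]
  filter_upwards [eventually_ge_atTop N, eventually_gt_atTop 0,
    tendsto_natCast_atTop_atTop.eventually_ge_atTop ((C + 1) * N - a N)] with j hjN hj hj_large
  rw [le_div_iff₀ (Nat.cast_pos.mpr hj)]
  linarith [hlinear j hjN]

lemma tendsto_log_abs_log_div_atTop {m : ℕ → ℝ} (hm : ∀ j, m j ∈ Ioo 0 1)
    (hpow : ∀ K : ℕ, ∀ᶠ j in atTop, m (j + 1) ≤ m j ^ K) :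
    Tendsto (fun j => Real.log |Real.log (m j)| / j) atTop atTop := by
  have hlog (j : ℕ) : 0 < |Real.log (m j)| :=
    abs_pos.mpr (Real.log_neg (hm j).1 (hm j).2).ne
  refine tendsto_div_natCast_atTop_of_tendsto_sub (tendsto_atTop.mpr fun C => ?_)
  obtain ⟨K, hK⟩ := exists_nat_gt (Real.exp C)
  filter_upwards [hpow K] with j hj
  have hmul : K * |Real.log (m j)| ≤ |Real.log (m (j + 1))| := by
    have := Real.log_le_log (hm (j + 1)).1 hj
    rw [Real.log_pow] at this
    rw [abs_of_neg (Real.log_neg (hm j).1 (hm j).2),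
      abs_of_neg (Real.log_neg (hm (j + 1)).1 (hm (j + 1)).2)]
    linarith
  rw [← Real.log_div (hlog _).ne' (hlog j).ne', Real.le_log_iff_exp_le (div_pos (hlog _) (hlog j)),
    le_div_iff₀ (hlog j)]
  exact (mul_le_mul_of_nonneg_right hK.le (hlog j).le).trans hmul

theorem bernstein_level_sets_corollary
    (f : ℝ → ℝ) (hf : ContinuousOn f (Set.Icc (-1:ℝ) 1))
    (hf0 : ∃ x ∈ Set.Icc (-1:ℝ) 1, f x ≠ 0)
    (β : ℝ) (hβ : 0 < β)
    (n : ℕ → ℕ) (hmono : StrictMono n) (hpos : ∀ j, 0 < n j)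
    (hlac : Tendsto (fun j => (n (j+1) : ℝ) / (n j : ℝ)) atTop atTop)
    (happrox : ∀ j, En f (n j) ≤ Real.exp (-β * (n j : ℝ)))
    (hm : ∀ j, 0 < mf f (Estar f (n j)) ∧ mf f (Estar f (n j)) < 1) :
    Tendsto (fun j => Real.log |Real.log (mf f (Estar f (n j)))| / (j : ℝ))
      atTop atTop := by
  have hγ : 0 < min β 1 := by positivity
  have hE (j : ℕ) : Estar f (n j) ≤ Real.exp (-(min β 1 * n j)) := by
    have : (0 : ℝ) ≤ n j := (n j).cast_nonneg
    refine max_le ((happrox j).trans ?_) ?_ <;> refine Real.exp_le_exp.mpr ?_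
    · nlinarith [min_le_left β 1]
    · nlinarith [min_le_right β 1]
  have hzero := tendsto_mf_Estar_zero hf hf0 hγ hmono.tendsto_atTop hE
  refine tendsto_log_abs_log_div_atTop hm fun K => ?_
  obtain ⟨ε, hε, η, hη, hstep⟩ := exists_eventually_mf_Estar_le_pow hf hγ K
  filter_upwards [(hmono.tendsto_atTop.comp (tendsto_add_atTop_nat 1)).eventually hstep,
    hzero.eventually_le_const hη, hlac.eventually_ge_atTop ε⁻¹] with j hj hjη hjε
  have hnj : (0 : ℝ) < n j := Nat.cast_pos.mpr (hpos j)
  refine hj (hE (j + 1)) (n j) ?_ ⟨(hm j).1, hjη⟩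
  rwa [le_div_iff₀ hnj, inv_mul_le_iff₀ hε] at hjε
end

section
/- Let f be a continuous real-valued function on [-1,1] that is not identically zero, let β > 0, and let (n_j) be a strictly increasing sequence of positive integers with lim_{j→∞} n_{j+1}/n_j = +∞ such that E_{n_j}(f) ≤ e^{-β n_j} for every j. Assume in addition that lim_{j→∞} |log E_{n_{j+1}}(f)| / |log E_{n_j}(f)| = +∞, and that 0 < m_f(E_{n_j}(f)) < 1 for every j. Then lim_{j→∞} |log m_f(E_{n_{j+1}}(f))| / |log m_f(E_{n_j}(f))| = +∞. -/
/-!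
A polynomial `P` of degree `N` that is small on a compact subset `A` of an interval `I` is small on
all of `I`: choose `q + 1` nodes in `A` whose gaps are about `|A| / q`, interpolate `P` there by
Lagrange's formula, and bound the remainder by Cauchy's estimates on discs of radius `r`, where the
Bernstein–Walsh inequality controls `P`. Replacing `P` by `f` costs an error `E_N(f)`.

Write `E_j = E_{n_j}(f)` and `m_j = m_f(E_j)`. Some interval of length about `2 m_j` carries its
share of `{|f| ≤ E_{j+1}}` and contains a point where `|f| > E_j`. Propagating smallness over it
with `N = n_{j+1}` and the best number of nodes gives
`|log m_j| (|log E_{j+1}| - D'_j) ≤ |log m_{j+1}| D_j`, in which `D_j` and `D'_j` are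
`o(|log E_{j+1}|)` as soon as `m_j → 0`. The latter holds because the zeros of `f` form a null set,
by Bernstein's quasianalyticity theorem, which follows from the same propagation estimate.
-/

open Filter MeasureTheory Set

open Polynomial Topology Asymptotics

/-- The Joukowski map, sending the circles about `0` to the ellipses with foci `±1` and the unit
circle to `[-1, 1]`. It is only used for `w ≠ 0`. -/
noncomputable def joukowski (w : ℂ) : ℂ := (w + w⁻¹) / 2

lemma exists_joukowski_eq (z : ℂ) : ∃ w : ℂ, w ≠ 0 ∧ ‖w‖ ≤ 1 ∧ joukowski w = z := by
  obtain ⟨s, hs⟩ := IsAlgClosed.exists_pow_nat_eq (z ^ 2 - 1) two_pos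
  have hmul : (z + s) * (z - s) = 1 := by linear_combination -hs
  have hne : z + s ≠ 0 := left_ne_zero_of_mul_eq_one hmul
  have hinv : (z + s)⁻¹ = z - s := inv_eq_of_mul_eq_one_right hmul
  by_cases h : ‖z + s‖ ≤ 1
  · exact ⟨z + s, hne, h, by rw [joukowski, hinv]; ring⟩
  · refine ⟨(z + s)⁻¹, inv_ne_zero hne, ?_, by rw [joukowski, inv_inv, hinv]; ring⟩
    rw [norm_inv]
    exact inv_le_one_of_one_le₀ (not_le.1 h).le

lemma joukowski_eq_re {w : ℂ} (hw : ‖w‖ = 1) : joukowski w = (w.re : ℂ) := by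
  simp [joukowski, Complex.inv_eq_conj hw, Complex.add_conj]

lemma norm_joukowski_add_one_add_norm_joukowski_sub_one {w : ℂ} (hw : w ≠ 0) :
    ‖joukowski w + 1‖ + ‖joukowski w - 1‖ = ‖w‖ + ‖w‖⁻¹ := by
  have hadd : joukowski w + 1 = (w + 1) ^ 2 / (2 * w) := by rw [joukowski]; field_simp; ring
  have hsub : joukowski w - 1 = (w - 1) ^ 2 / (2 * w) := by rw [joukowski]; field_simp; ring
  have hpar := parallelogram_law_with_norm ℝ w 1
  have hw' : ‖w‖ ≠ 0 := norm_ne_zero_iff.2 hw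
  rw [hadd, hsub, norm_div, norm_div, norm_pow, norm_pow, norm_mul, Complex.norm_two]
  rw [norm_one] at hpar
  field_simp
  linarith

lemma norm_add_inv_norm_le_of_norm_joukowski_sub_le {w : ℂ} (hw : w ≠ 0) {u r : ℝ}
    (hu : u ∈ Icc (-1 : ℝ) 1) (hr : ‖joukowski w - u‖ ≤ r) : ‖w‖ + ‖w‖⁻¹ ≤ 2 + 2 * r := by
  have hadd : ‖joukowski w + 1‖ ≤ ‖joukowski w - u‖ + (1 + u) := calc
    ‖joukowski w + 1‖ = ‖(joukowski w - u) + ((1 + u : ℝ) : ℂ)‖ := by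
      congr 1; push_cast; ring
    _ ≤ ‖joukowski w - u‖ + ‖((1 + u : ℝ) : ℂ)‖ := norm_add_le _ _
    _ = _ := by rw [Complex.norm_real, Real.norm_of_nonneg (by linarith [hu.1])]
  have hsub : ‖joukowski w - 1‖ ≤ ‖joukowski w - u‖ + (1 - u) := calc
    ‖joukowski w - 1‖ = ‖(joukowski w - u) - ((1 - u : ℝ) : ℂ)‖ := by
      congr 1; push_cast; ring
    _ ≤ ‖joukowski w - u‖ + ‖((1 - u : ℝ) : ℂ)‖ := norm_sub_le _ _
    _ = _ := by rw [Complex.norm_real, Real.norm_of_nonneg (by linarith [hu.2])]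
  linarith [norm_joukowski_add_one_add_norm_joukowski_sub_one hw]

lemma one_add_sq_div_two_le_cosh (x : ℝ) : 1 + x ^ 2 / 2 ≤ Real.cosh x := by
  have hsinh : |x / 2| ≤ |Real.sinh (x / 2)| := by
    rw [Real.abs_sinh]
    exact Real.self_le_sinh_iff.2 (abs_nonneg _)
  have hcosh : Real.cosh x = 1 + 2 * Real.sinh (x / 2) ^ 2 := by
    rw [show x = 2 * (x / 2) by ring, Real.cosh_two_mul, Real.cosh_sq]
    ring_nf
  linarith [sq_le_sq.2 hsinh]

lemma inv_le_exp_sqrt_of_add_inv_le {t r : ℝ} (ht : 0 < t) (ht1 : t ≤ 1)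
    (h : t + t⁻¹ ≤ 2 + 2 * r) : t⁻¹ ≤ Real.exp (√(2 * r)) := by
  obtain ⟨l, rfl⟩ : ∃ l, t = Real.exp (-l) := ⟨-Real.log t, by rw [neg_neg, Real.exp_log ht]⟩
  rw [← Real.exp_neg, neg_neg] at h ⊢
  gcongr
  apply Real.le_sqrt_of_sq_le
  have hcosh := one_add_sq_div_two_le_cosh l
  rw [Real.cosh_eq] at hcosh
  linarith

/-- The weight `w ^ N` cancels the pole of `P ∘ joukowski` at `0`, so the maximum principle on the
unit disc applies. -/
lemma norm_aeval_joukowski_le {P : ℝ[X]} {N : ℕ} (hN : P.natDegree ≤ N) {M : ℝ}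
    (hM : ∀ x ∈ Icc (-1 : ℝ) 1, |P.eval x| ≤ M) {w : ℂ} (hw : w ≠ 0) (hw1 : ‖w‖ ≤ 1) :
    ‖aeval (joukowski w) P‖ ≤ M * ‖w‖⁻¹ ^ N := by
  let F : ℂ → ℂ := fun w => ∑ k ∈ Finset.range (N + 1),
    (P.coeff k : ℂ) * ((w ^ 2 + 1) / 2) ^ k * w ^ (N - k)
  have hF {w : ℂ} (hw : w ≠ 0) : F w = w ^ N * aeval (joukowski w) P := by
    rw [aeval_eq_sum_range' (n := N + 1) (by omega), Finset.mul_sum]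
    refine Finset.sum_congr rfl fun k hk => ?_
    have hkN : k + (N - k) = N := by grind
    have hsq : (w ^ 2 + 1) / 2 = w * joukowski w := by rw [joukowski]; field_simp
    rw [hsq, mul_pow, Complex.real_smul, ← hkN, pow_add, hkN]
    ring
  have hsphere {w : ℂ} (hw : ‖w‖ = 1) : ‖F w‖ ≤ M := by
    have hw0 : w ≠ 0 := norm_ne_zero_iff.1 (by simp [hw])
    have haeval := aeval_algebraMap_apply ℂ w.re P
    rw [Complex.coe_algebraMap, coe_aeval_eq_eval] at haeval
    rw [hF hw0, norm_mul, norm_pow, hw, one_pow, one_mul, joukowski_eq_re hw, haeval,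
      Complex.norm_real]
    exact hM _ (abs_le.1 ((Complex.abs_re_le_norm w).trans hw.le))
  have hFw : ‖F w‖ ≤ M := by
    refine Complex.norm_le_of_forall_mem_frontier_norm_le (U := Metric.ball 0 1)
      Metric.isBounded_ball (Differentiable.diffContOnCl (by unfold F; fun_prop)) (fun z hz => ?_)
      (by simpa [closure_ball] using hw1)
    exact hsphere (by simpa [frontier_ball] using hz)
  rw [hF hw, norm_mul, norm_pow] at hFw
  rw [inv_pow, ← div_eq_mul_inv, le_div_iff₀' (by positivity)]
  exact hFw

lemma norm_aeval_le_mul_exp_sqrt {P : ℝ[X]} {N : ℕ} (hN : P.natDegree ≤ N) {M : ℝ}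
    (hM : ∀ x ∈ Icc (-1 : ℝ) 1, |P.eval x| ≤ M) {u r : ℝ} (hu : u ∈ Icc (-1 : ℝ) 1)
    {z : ℂ} (hz : ‖z - u‖ ≤ r) : ‖aeval z P‖ ≤ M * Real.exp (N * √(2 * r)) := by
  obtain ⟨w, hw, hw1, rfl⟩ := exists_joukowski_eq z
  have hM0 : 0 ≤ M := (abs_nonneg _).trans (hM u hu)
  rw [Real.exp_nat_mul]
  refine (norm_aeval_joukowski_le hN hM hw hw1).trans ?_
  gcongr
  exact inv_le_exp_sqrt_of_add_inv_le (norm_pos_iff.2 hw) hw1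
    (norm_add_inv_norm_le_of_norm_joukowski_sub_le hw hu hz)

lemma iteratedDeriv_aeval_eq_aeval_iterate_derivative (P : ℝ[X]) (k : ℕ) :
    iteratedDeriv k (fun z : ℂ => aeval z P) = fun z => aeval z (derivative^[k] P) := by
  induction k with
  | zero => simp
  | succ k ih =>
    rw [iteratedDeriv_succ, ih, Function.iterate_succ_apply']
    exact funext fun z => (derivative^[k] P).deriv_aeval

lemma abs_eval_iterate_derivative_le {P : ℝ[X]} {N : ℕ} (hN : P.natDegree ≤ N) {M : ℝ}
    (hM : ∀ x ∈ Icc (-1 : ℝ) 1, |P.eval x| ≤ M) {u r : ℝ} (hu : u ∈ Icc (-1 : ℝ) 1) (hr : 0 < r)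
    (k : ℕ) :
    |(derivative^[k] P).eval u| ≤ k.factorial * (M * Real.exp (N * √(2 * r))) / r ^ k := by
  have haeval := aeval_algebraMap_apply ℂ u (derivative^[k] P)
  rw [Complex.coe_algebraMap, coe_aeval_eq_eval] at haeval
  rw [← Real.norm_eq_abs, ← Complex.norm_real, ← haeval,
    ← congrFun (iteratedDeriv_aeval_eq_aeval_iterate_derivative P k)]
  exact Complex.norm_iteratedDeriv_le_of_forall_mem_sphere_norm_le k hr
    P.differentiable_aeval.diffContOnCl
    fun z hz => norm_aeval_le_mul_exp_sqrt hN hM hu (mem_sphere_iff_norm.1 hz).le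

lemma exists_eval_iterate_derivative_eq_zero {a b : ℝ} {n : ℕ} {P : ℝ[X]} {S : Finset ℝ}
    (hS : ∀ x ∈ S, x ∈ Icc a b ∧ P.eval x = 0) (hcard : n < S.card) :
    ∃ ξ ∈ Icc a b, (derivative^[n] P).eval ξ = 0 := by
  induction n generalizing P S with
  | zero =>
    obtain ⟨x, hx⟩ := Finset.card_pos.1 hcard
    exact ⟨x, hS x hx⟩
  | succ n ih =>
    rcases eq_or_ne (derivative P) 0 with hP | hP
    · obtain ⟨x, hx⟩ := Finset.card_pos.1 (Nat.zero_lt_of_lt hcard)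
      exact ⟨x, (hS x hx).1, by simp [hP]⟩
    let T := (derivative P).roots.toFinset.filter (· ∈ Icc a b)
    have hST : S.card ≤ T.card + 1 := by
      refine Finset.card_le_of_interleaved fun x hx y hy hxy _ => ?_
      obtain ⟨z, hz, hz0⟩ := exists_deriv_eq_zero hxy P.continuousOn
        ((hS x hx).2.trans (hS y hy).2.symm)
      rw [P.deriv] at hz0
      refine ⟨z, ?_, hz⟩
      simp only [T, Finset.mem_filter, Multiset.mem_toFinset, mem_roots hP]
      exact ⟨hz0, (hS x hx).1.1.trans hz.1.le, hz.2.le.trans (hS y hy).1.2⟩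
    refine ih (S := T) (fun x hx => ?_) (by omega)
    simp only [T, Finset.mem_filter, Multiset.mem_toFinset, mem_roots hP] at hx
    exact ⟨hx.2, hx.1⟩

lemma iterate_derivative_card_nodal {ι R : Type*} [CommRing R] {s : Finset ι}
    {v : ι → R} (hv : InjOn v s) :
    derivative^[s.card] (Lagrange.nodal s v) = (s.card.factorial : R[X]) := by
  classical
  rw [Lagrange.nodal, ← Finset.prod_image (f := fun a => X - C a) hv,
    ← Finset.card_image_of_injOn hv, iterate_derivative_prod_X_sub_C le_rfl]
  simp

lemma exists_eval_eq_interpolate_add {ι : Type*} [DecidableEq ι] {s : Finset ι} {v : ι → ℝ}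
    (hv : InjOn v s) {a b : ℝ} (hvI : ∀ i ∈ s, v i ∈ Icc a b) (P : ℝ[X]) {x : ℝ}
    (hx : x ∈ Icc a b) :
    ∃ ξ ∈ Icc a b, P.eval x = (Lagrange.interpolate s v (fun i => P.eval (v i))).eval x +
      (derivative^[s.card] P).eval ξ / s.card.factorial * (Lagrange.nodal s v).eval x := by
  set L := Lagrange.interpolate s v (fun i => P.eval (v i))
  have hLv {i : ι} (hi : i ∈ s) : L.eval (v i) = P.eval (v i) :=
    Lagrange.eval_interpolate_at_node _ hv hi
  by_cases hnode : ∃ i ∈ s, x = v i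
  · obtain ⟨i, hi, rfl⟩ := hnode
    exact ⟨v i, hx, by rw [hLv hi, Lagrange.eval_nodal_at_node hi, mul_zero, add_zero]⟩
  push Not at hnode
  have hnodal : (Lagrange.nodal s v).eval x ≠ 0 := Lagrange.eval_nodal_not_at_node hnode
  set c := (P.eval x - L.eval x) / (Lagrange.nodal s v).eval x
  have hcx : c * (Lagrange.nodal s v).eval x = P.eval x - L.eval x := div_mul_cancel₀ _ hnodal
  obtain ⟨ξ, hξ, hξ0⟩ := exists_eval_iterate_derivative_eq_zero (n := s.card)
    (P := P - L - C c * Lagrange.nodal s v) (S := insert x (s.image v)) (a := a) (b := b)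
    (by
      simp only [Finset.mem_insert, Finset.mem_image]
      rintro y (rfl | ⟨i, hi, rfl⟩)
      · exact ⟨hx, by simp [hcx]⟩
      · exact ⟨hvI i hi, by simp [hLv hi, Lagrange.eval_nodal_at_node hi]⟩)
    (by rw [Finset.card_insert_of_notMem (by simpa [eq_comm] using hnode),
      Finset.card_image_of_injOn hv]; exact Nat.lt_succ_self _)
  refine ⟨ξ, hξ, ?_⟩
  rw [iterate_derivative_sub, iterate_derivative_sub, iterate_derivative_C_mul,
    iterate_derivative_card_nodal hv,
    iterate_derivative_eq_zero_of_degree_lt (Lagrange.degree_interpolate_lt _ hv)] at hξ0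
  have hfact : (derivative^[s.card] P).eval ξ = c * s.card.factorial := by
    simpa [sub_eq_zero] using hξ0
  rw [hfact, mul_div_cancel_right₀ _ (by positivity), hcx]
  ring

lemma prod_abs_sub_range_erase {q i : ℕ} (hi : i ≤ q) :
    ∏ j ∈ (Finset.range (q + 1)).erase i, |(i : ℝ) - j| = i.factorial * (q - i).factorial := by
  have hsplit : (Finset.range (q + 1)).erase i = Finset.range i ∪ Finset.Ico (i + 1) (q + 1) := by
    grind
  rw [hsplit, Finset.prod_union (by
    rw [Finset.disjoint_left]; grind), Finset.prod_Ico_eq_prod_range, Nat.add_sub_add_right,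
    ← Finset.prod_range_reflect, ← Finset.prod_range_add_one_eq_factorial i,
    ← Finset.prod_range_add_one_eq_factorial (q - i)]
  push_cast
  congr 1 <;> refine Finset.prod_congr rfl fun j hj => ?_
  · have hj' : j + 1 ≤ i := Finset.mem_range.1 hj
    rw [show i - 1 - j = i - (j + 1) by omega, Nat.cast_sub hj', abs_of_nonneg]
    · push_cast; ring
    · linarith
  · rw [abs_of_nonpos]
    · ring
    · linarith

lemma sum_inv_factorial_mul_factorial (q : ℕ) :
    ∑ i ∈ Finset.range (q + 1), ((i.factorial : ℝ) * (q - i).factorial)⁻¹ =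
      2 ^ q / q.factorial := by
  rw [← Nat.cast_two, ← Nat.cast_pow, ← Nat.sum_range_choose, Nat.cast_sum, Finset.sum_div]
  refine Finset.sum_congr rfl fun i hi => ?_
  rw [Nat.cast_choose ℝ (Finset.mem_range_succ_iff.1 hi)]
  field_simp

section SeparatedNodes

variable {v : ℕ → ℝ} {q : ℕ} {h : ℝ}

lemma injective_of_separated (hh : 0 < h)
    (hv : ∀ i j : ℕ, h * |(i : ℝ) - j| ≤ |v i - v j|) : Function.Injective v := by
  intro i j hij
  have hle := hv i j
  rw [hij, sub_self, abs_zero] at hle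
  have : |(i : ℝ) - j| ≤ 0 := nonpos_of_mul_nonpos_right hle hh
  exact_mod_cast sub_eq_zero.1 (abs_nonpos_iff.1 this)

lemma abs_eval_basis_le_of_separated (hh : 0 < h) (hv : ∀ i j : ℕ, h * |(i : ℝ) - j| ≤ |v i - v j|)
    {x δ : ℝ} (hx : ∀ i ≤ q, |x - v i| ≤ δ) {i : ℕ} (hi : i ≤ q) :
    |(Lagrange.basis (Finset.range (q + 1)) v i).eval x| ≤
      (δ / h) ^ q * ((i.factorial : ℝ) * (q - i).factorial)⁻¹ := by
  have hcard : ((Finset.range (q + 1)).erase i).card = q := by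
    rw [Finset.card_erase_of_mem (Finset.mem_range_succ_iff.2 hi), Finset.card_range]
    rfl
  have hfactor : (δ / h) ^ q * ((i.factorial : ℝ) * (q - i).factorial)⁻¹ =
      ∏ j ∈ (Finset.range (q + 1)).erase i, (h * |(i : ℝ) - j|)⁻¹ * δ := by
    rw [← prod_abs_sub_range_erase hi]
    simp only [mul_inv, Finset.prod_mul_distrib, Finset.prod_const, hcard,
      Finset.prod_inv_distrib, div_pow, inv_pow]
    ring
  rw [hfactor, Lagrange.basis, eval_prod, Finset.abs_prod]
  refine Finset.prod_le_prod (fun _ _ => abs_nonneg _) fun j hj => ?_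
  obtain ⟨hji, hj⟩ := Finset.mem_erase.1 hj
  have hij : 0 < h * |(i : ℝ) - j| :=
    mul_pos hh (abs_pos.2 (sub_ne_zero.2 (Nat.cast_injective.ne hji.symm)))
  simp only [Lagrange.basisDivisor, eval_mul, eval_C, eval_sub, eval_X, abs_mul, abs_inv]
  gcongr
  exacts [hv i j, hx j (Finset.mem_range_succ_iff.1 hj)]

lemma abs_eval_interpolate_le_of_separated (hh : 0 < h)
    (hv : ∀ i j : ℕ, h * |(i : ℝ) - j| ≤ |v i - v j|) {x δ : ℝ} (hx : ∀ i ≤ q, |x - v i| ≤ δ)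
    {y : ℕ → ℝ} {ε : ℝ} (hy : ∀ i ≤ q, |y i| ≤ ε) :
    |(Lagrange.interpolate (Finset.range (q + 1)) v y).eval x| ≤
      ε * ((2 * (δ / h)) ^ q / q.factorial) := by
  rw [Lagrange.interpolate_apply, eval_finsetSum]
  calc |∑ i ∈ Finset.range (q + 1), (C (y i) * Lagrange.basis _ v i).eval x|
    _ ≤ ∑ i ∈ Finset.range (q + 1), |(C (y i) * Lagrange.basis _ v i).eval x| :=
      Finset.abs_sum_le_sum_abs _ _
    _ ≤ ∑ i ∈ Finset.range (q + 1),
        ε * ((δ / h) ^ q * ((i.factorial : ℝ) * (q - i).factorial)⁻¹) := by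
      refine Finset.sum_le_sum fun i hi => ?_
      have hiq := Finset.mem_range_succ_iff.1 hi
      rw [eval_mul, eval_C, abs_mul]
      exact mul_le_mul (hy i hiq) (abs_eval_basis_le_of_separated hh hv hx hiq) (abs_nonneg _)
        ((abs_nonneg _).trans (hy i hiq))
    _ = ε * ((2 * (δ / h)) ^ q / q.factorial) := by
      rw [← Finset.mul_sum, ← Finset.mul_sum, sum_inv_factorial_mul_factorial, mul_pow]
      ring

end SeparatedNodes

lemma exists_separated_mem {h : ℝ} (hh : 0 ≤ h) (q : ℕ) {A : Set ℝ} (hA : IsCompact A)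
    (hvol : ENNReal.ofReal (q * h) < volume A) :
    ∃ v : ℕ → ℝ, (∀ i ≤ q, v i ∈ A) ∧ ∀ i, v i + h ≤ v (i + 1) := by
  induction q generalizing A with
  | zero =>
    obtain ⟨x, hx⟩ := nonempty_of_measure_ne_zero hvol.ne_bot
    refine ⟨fun i => x + i * h, by simpa, fun i => ?_⟩
    push_cast
    linarith
  | succ q ih =>
    have hx := hA.sInf_mem (nonempty_of_measure_ne_zero hvol.ne_bot)
    set x := sInf A
    have hsub : A ⊆ Icc x (x + h) ∪ A ∩ Ici (x + h) := fun y hy =>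
      (le_total y (x + h)).imp (fun hy' => ⟨csInf_le hA.bddBelow hy, hy'⟩) fun hy' => ⟨hy, hy'⟩
    have hrest : ENNReal.ofReal (q * h) < volume (A ∩ Ici (x + h)) := by
      contrapose! hvol with hle
      calc volume A
        _ ≤ volume (Icc x (x + h)) + volume (A ∩ Ici (x + h)) :=
          (measure_mono hsub).trans (measure_union_le _ _)
        _ ≤ ENNReal.ofReal h + ENNReal.ofReal (q * h) := by
          rw [Real.volume_Icc, add_sub_cancel_left]
          gcongr
        _ = ENNReal.ofReal ((q + 1 : ℕ) * h) := by
          rw [← ENNReal.ofReal_add hh (by positivity)]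
          push_cast
          ring_nf
    obtain ⟨v, hvA, hv⟩ := ih (hA.inter_right isClosed_Ici) hrest
    refine ⟨fun i => i.casesOn x v, fun i hi => ?_, fun i => ?_⟩ <;> rcases i with _ | i
    exacts [hx, (hvA i (Nat.le_of_succ_le_succ hi)).1, (hvA 0 q.zero_le).2, hv i]

lemma mul_abs_sub_le_abs_sub_of_add_le {h : ℝ} {v : ℕ → ℝ}
    (hv : ∀ i, v i + h ≤ v (i + 1)) (i j : ℕ) : h * |(i : ℝ) - j| ≤ |v i - v j| := by
  have hmono : Monotone fun i : ℕ => v i - h * i :=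
    monotone_nat_of_le_succ fun i => by push_cast; linarith [hv i]
  wlog hij : i ≤ j generalizing i j
  · rw [abs_sub_comm, abs_sub_comm (v i)]
    exact this j i (by omega)
  have hle : v i - h * i ≤ v j - h * j := hmono hij
  have hij' : (i : ℝ) ≤ j := mod_cast hij
  rw [abs_sub_comm, abs_sub_comm (v i), abs_of_nonneg (sub_nonneg.2 hij')]
  exact le_abs.2 (Or.inl (by linarith))

lemma abs_eval_nodal_le {ι : Type*} {s : Finset ι} {v : ι → ℝ} {x δ : ℝ}
    (hx : ∀ i ∈ s, |x - v i| ≤ δ) : |(Lagrange.nodal s v).eval x| ≤ δ ^ s.card := by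
  rw [Lagrange.eval_nodal, Finset.abs_prod]
  exact (Finset.prod_le_prod (fun _ _ => abs_nonneg _) hx).trans_eq (by simp)

lemma mul_succ_pow_div_factorial_le {c : ℝ} (hc : 0 ≤ c) (q : ℕ) :
    (c * (q + 1)) ^ q / q.factorial ≤ Real.exp 1 * (Real.exp 1 * c) ^ q := by
  have hexp := Real.pow_div_factorial_le_exp (q + 1 : ℝ) (by positivity) (q + 1)
  rw [Nat.factorial_succ, Nat.cast_mul, pow_succ', Nat.cast_succ,
    mul_div_mul_left _ _ (by positivity)] at hexp
  calc (c * (q + 1)) ^ q / q.factorial = c ^ q * ((q + 1) ^ q / q.factorial) := by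
        rw [mul_pow, mul_div_assoc]
    _ ≤ c ^ q * Real.exp (q + 1) := by gcongr
    _ = Real.exp 1 * (Real.exp 1 * c) ^ q := by
        rw [Real.exp_add, mul_pow, ← Real.exp_nat_mul, mul_one]
        ring

lemma abs_eval_sub_eval_interpolate_le {P : ℝ[X]} {N : ℕ} (hN : P.natDegree ≤ N) {M : ℝ}
    (hM : ∀ x ∈ Icc (-1 : ℝ) 1, |P.eval x| ≤ M) {a b : ℝ} (hab : Icc a b ⊆ Icc (-1) 1)
    {ι : Type*} [DecidableEq ι] {s : Finset ι} {v : ι → ℝ} (hv : InjOn v s)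
    (hvab : ∀ i ∈ s, v i ∈ Icc a b) {r : ℝ} (hr : 0 < r) {x : ℝ} (hx : x ∈ Icc a b) :
    |P.eval x - (Lagrange.interpolate s v fun i => P.eval (v i)).eval x| ≤
      M * Real.exp (N * √(2 * r)) * ((b - a) / r) ^ s.card := by
  obtain ⟨ξ, hξ, hP⟩ := exists_eval_eq_interpolate_add hv hvab P hx
  have hderiv := abs_eval_iterate_derivative_le hN hM (hab hξ) hr s.card
  rw [mul_div_assoc, ← div_le_iff₀' (by positivity)] at hderiv
  have hnodal : |(Lagrange.nodal s v).eval x| ≤ (b - a) ^ s.card :=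
    abs_eval_nodal_le fun i hi => Real.dist_le_of_mem_Icc hx (hvab i hi)
  rw [hP, add_sub_cancel_left, abs_mul, abs_div, Nat.abs_cast, div_pow, mul_div_left_comm,
    mul_comm ((b - a) ^ _)]
  exact mul_le_mul hderiv hnodal (abs_nonneg _) ((by positivity : (0 : ℝ) ≤ _).trans hderiv)

lemma abs_eval_le_of_abs_eval_le_on {P : ℝ[X]} {N : ℕ} (hN : P.natDegree ≤ N) {M : ℝ}
    (hM : ∀ x ∈ Icc (-1 : ℝ) 1, |P.eval x| ≤ M) {a b : ℝ} (hab : Icc a b ⊆ Icc (-1) 1)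
    {A : Set ℝ} (hA : IsCompact A) (hAab : A ⊆ Icc a b) (hvol : 0 < volume.real A) {ε : ℝ}
    (hε : ∀ x ∈ A, |P.eval x| ≤ ε) {r : ℝ} (hr : 0 < r) (q : ℕ) {x : ℝ} (hx : x ∈ Icc a b) :
    |P.eval x| ≤ ε * (Real.exp 1 * (2 * Real.exp 1 * (b - a) / volume.real A) ^ q) +
      M * Real.exp (N * √(2 * r)) * ((b - a) / r) ^ (q + 1) := by
  set μ := volume.real A
  have hh : 0 < μ / (q + 1) := by positivity
  obtain ⟨v, hvA, hvh⟩ := exists_separated_mem hh.le q hA <| by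
    rw [← ofReal_measureReal hA.measure_lt_top.ne]
    refine (ENNReal.ofReal_lt_ofReal_iff hvol).2 ?_
    rw [mul_div_left_comm]
    exact mul_lt_of_lt_one_right hvol ((div_lt_one (by positivity)).2 (lt_add_one _))
  have hv := mul_abs_sub_le_abs_sub_of_add_le hvh
  have hxv : ∀ i ≤ q, |x - v i| ≤ b - a := fun i hi =>
    Real.dist_le_of_mem_Icc hx (hAab (hvA i hi))
  have hε0 : 0 ≤ ε := (abs_nonneg _).trans (hε _ (hvA 0 q.zero_le))
  have hδ : 0 ≤ b - a := (abs_nonneg _).trans (hxv 0 q.zero_le)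
  have hrem := abs_eval_sub_eval_interpolate_le hN hM hab (s := Finset.range (q + 1))
    (injective_of_separated hh hv).injOn
    (fun i hi => hAab (hvA i (Finset.mem_range_succ_iff.1 hi))) hr hx
  have hinterp := abs_eval_interpolate_le_of_separated hh hv hxv fun i hi => hε _ (hvA i hi)
  have hconst : (2 * ((b - a) / (μ / (q + 1)))) ^ q / q.factorial ≤
      Real.exp 1 * (2 * Real.exp 1 * (b - a) / μ) ^ q := by
    rw [show 2 * ((b - a) / (μ / (q + 1))) = 2 * (b - a) / μ * (q + 1) by field_simp,
      show 2 * Real.exp 1 * (b - a) / μ = Real.exp 1 * (2 * (b - a) / μ) by ring]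
    exact mul_succ_pow_div_factorial_le (by positivity) q
  rw [Finset.card_range] at hrem
  linarith [abs_sub_abs_le_abs_sub (P.eval x)
    ((Lagrange.interpolate (Finset.range (q + 1)) v fun i => P.eval (v i)).eval x),
    mul_le_mul_of_nonneg_left hconst hε0]

lemma En_nonneg (f : ℝ → ℝ) (n : ℕ) : 0 ≤ En f n := by
  refine Real.sInf_nonneg ?_
  rintro _ ⟨P, -, rfl⟩
  refine Real.sSup_nonneg ?_
  rintro _ ⟨x, -, rfl⟩
  exact abs_nonneg _

lemma En_le_one_of_le_exp_neg_mul {f : ℝ → ℝ} {β : ℝ} (hβ : 0 < β) {n : ℕ}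
    (hn : En f n ≤ Real.exp (-β * n)) : En f n ≤ 1 :=
  hn.trans (Real.exp_le_one_iff.2
    (mul_nonpos_of_nonpos_of_nonneg (neg_nonpos.2 hβ.le) n.cast_nonneg))

lemma exists_natDegree_le_abs_sub_eval_le {f : ℝ → ℝ} (hf : ContinuousOn f (Icc (-1) 1)) {n : ℕ}
    {η : ℝ} (hη : En f n < η) :
    ∃ P : ℝ[X], P.natDegree ≤ n ∧ ∀ x ∈ Icc (-1 : ℝ) 1, |f x - P.eval x| ≤ η := by
  obtain ⟨_, ⟨P, hP, rfl⟩, hPη⟩ := exists_lt_of_csInf_lt (Nonempty.image _ ⟨0, by simp⟩) hη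
  refine ⟨P, hP, fun x hx => (le_csSup ?_ (mem_image_of_mem _ hx)).trans hPη.le⟩
  exact (isCompact_Icc.image_of_continuousOn (hf.sub P.continuousOn).abs).bddAbove

lemma isCompact_sublevel_inter_Icc {f : ℝ → ℝ} (hf : ContinuousOn f (Icc (-1) 1)) (t : ℝ)
    {a b : ℝ} (hab : Icc a b ⊆ Icc (-1) 1) : IsCompact ({x | |f x| ≤ t} ∩ Icc a b) := by
  rw [inter_comm]
  exact isCompact_Icc.of_isClosed_subset
    ((hf.mono hab).abs.preimage_isClosed_of_isClosed isClosed_Icc isClosed_Iic) inter_subset_left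

lemma abs_le_of_sublevel_inter_Icc {f : ℝ → ℝ} (hf : ContinuousOn f (Icc (-1) 1)) {M : ℝ}
    (hM : ∀ x ∈ Icc (-1 : ℝ) 1, |f x| ≤ M) {a b t : ℝ} (hab : Icc a b ⊆ Icc (-1) 1)
    (hvol : 0 < volume.real ({x | |f x| ≤ t} ∩ Icc a b)) {r : ℝ} (hr : 0 < r) (N q : ℕ) {x : ℝ}
    (hx : x ∈ Icc a b) :
    |f x| ≤ En f N + ((t + En f N) * (Real.exp 1 *
      (2 * Real.exp 1 * (b - a) / volume.real ({x | |f x| ≤ t} ∩ Icc a b)) ^ q) +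
      (M + En f N) * Real.exp (N * √(2 * r)) * ((b - a) / r) ^ (q + 1)) := by
  set A := {x | |f x| ≤ t} ∩ Icc a b
  refine ge_of_tendsto (x := 𝓝[>] En f N) (f := fun η => η + ((t + η) * (Real.exp 1 *
    (2 * Real.exp 1 * (b - a) / volume.real A) ^ q) +
      (M + η) * Real.exp (N * √(2 * r)) * ((b - a) / r) ^ (q + 1)))
    ((Continuous.tendsto (by fun_prop) _).mono_left nhdsWithin_le_nhds)
    (eventually_nhdsWithin_of_forall fun η hη => ?_)
  obtain ⟨P, hPN, hP⟩ := exists_natDegree_le_abs_sub_eval_le hf hη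
  have hPf {y c : ℝ} (hy : y ∈ Icc (-1) 1) (hfy : |f y| ≤ c) : |P.eval y| ≤ c + η := by
    linarith [abs_sub_abs_le_abs_sub (P.eval y) (f y), abs_sub_comm (P.eval y) (f y), hP y hy]
  have hPx := abs_eval_le_of_abs_eval_le_on hPN (fun y hy => hPf hy (hM y hy)) hab
    (isCompact_sublevel_inter_Icc hf t hab) inter_subset_right hvol
    (fun y hy => hPf (hab hy.2) hy.1) hr q hx
  linarith [abs_sub_abs_le_abs_sub (f x) (P.eval x), hP x (hab hx)]

lemma exists_nat_div_mem_Ioc {L η : ℝ} (hη : 0 < η) (hL : η ≤ L) :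
    ∃ K : ℕ, K ≠ 0 ∧ L / K ∈ Ioc (η / 2) η := by
  have hL0 : 0 < L := hη.trans_le hL
  have hK : 0 < ⌈L / η⌉₊ := Nat.ceil_pos.2 (by positivity)
  refine ⟨⌈L / η⌉₊, hK.ne', ?_, ?_⟩
  · have hceil := Nat.ceil_lt_add_one (show 0 ≤ L / η by positivity)
    have hone : 1 ≤ L / η := (one_le_div hη).2 hL
    rw [lt_div_iff₀ (by positivity)]
    calc η / 2 * ⌈L / η⌉₊ < η / 2 * (2 * (L / η)) := by gcongr; linarith
      _ = L := by field_simp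
  · rw [div_le_comm₀ (by positivity) hη]
    exact Nat.le_ceil _

lemma volume_real_inter_Icc_le_sum (S : Set ℝ) (e : ℕ → ℝ) (K : ℕ) :
    volume.real (S ∩ Icc (e 0) (e K)) ≤
      ∑ i ∈ Finset.range K, volume.real (S ∩ Icc (e i) (e (i + 1))) := by
  have hfin (a b : ℝ) : volume (S ∩ Icc a b) ≠ ⊤ :=
    measure_ne_top_of_subset inter_subset_right measure_Icc_lt_top.ne
  induction K with
  | zero =>
    rw [Icc_self, Finset.sum_range_zero]
    exact (measureReal_mono_null inter_subset_right (by simp [measureReal_def]) (by simp)).le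
  | succ K ih =>
    rw [Finset.sum_range_succ]
    refine le_trans ?_ (add_le_add_left ih _)
    refine (measureReal_mono ?_ (measure_union_ne_top (hfin _ _) (hfin _ _))).trans
      (measureReal_union_le _ _)
    rw [← inter_union_distrib_left]
    exact inter_subset_inter_right S Icc_subset_Icc_union_Icc

lemma exists_subinterval_volume_mul_le (S : Set ℝ) {c d η : ℝ} (hη : 0 < η) (hηcd : η ≤ d - c) :
    ∃ a b, Icc a b ⊆ Icc c d ∧ b - a ∈ Ioc (η / 2) η ∧
      volume.real (S ∩ Icc c d) * (b - a) ≤ (d - c) * volume.real (S ∩ Icc a b) := by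
  obtain ⟨K, hK, hη'⟩ := exists_nat_div_mem_Ioc hη hηcd
  have hK0 : (0 : ℝ) < K := by positivity
  set ℓ := (d - c) / K
  have hℓ : 0 < ℓ := (half_pos hη).trans hη'.1
  have hℓK : K * ℓ = d - c := mul_div_cancel₀ _ hK0.ne'
  let e : ℕ → ℝ := fun i => c + i * ℓ
  have he (i : ℕ) : e (i + 1) - e i = ℓ := by simp only [e]; push_cast; ring
  have hsum := volume_real_inter_Icc_le_sum S e K
  rw [show e 0 = c by simp [e], show e K = d by simp [e, hℓK]] at hsum
  obtain ⟨i, hi, hmax⟩ := Finset.exists_le_of_sum_le (Finset.nonempty_range_iff.2 hK)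
    (f := fun _ => volume.real (S ∩ Icc c d) / K)
    (g := fun i => volume.real (S ∩ Icc (e i) (e (i + 1)))) (by
      rwa [Finset.sum_const, Finset.card_range, nsmul_eq_mul, mul_div_cancel₀ _ hK0.ne'])
  have hiK : ((i + 1 : ℕ) : ℝ) ≤ K := mod_cast Finset.mem_range.1 hi
  refine ⟨e i, e (i + 1), Icc_subset_Icc ?_ ?_, by rwa [he], ?_⟩
  · exact le_add_of_nonneg_right (by positivity)
  · linarith [mul_le_mul_of_nonneg_right hiK hℓ.le]
  · rw [he, ← hℓK, mul_right_comm]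
    exact mul_le_mul_of_nonneg_right ((div_le_iff₀' hK0).1 hmax) hℓ.le

lemma pow_div_le_exp_mul {y c : ℝ} {p : ℕ} (hy : 0 ≤ y) (hc : 0 ≤ c) (hyp : y ≤ Real.exp (p * c))
    (N : ℕ) : y ^ (N / p) ≤ Real.exp (c * N) := calc
  y ^ (N / p) ≤ Real.exp (p * c) ^ (N / p) := by gcongr
  _ = Real.exp (c * (p * (N / p) : ℕ)) := by
    rw [← Real.exp_nat_mul]
    push_cast
    ring_nf
  _ ≤ Real.exp (c * N) := by
    gcongr
    exact Nat.mul_div_le N p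

lemma pow_div_add_one_le_exp_neg_mul {y c : ℝ} {p : ℕ} (hp : p ≠ 0) (hy : 0 ≤ y) (hc : 0 ≤ c)
    (hyp : y ≤ Real.exp (-(p * c))) (N : ℕ) : y ^ (N / p + 1) ≤ Real.exp (-c * N) := calc
  y ^ (N / p + 1) ≤ Real.exp (-(p * c)) ^ (N / p + 1) := by gcongr
  _ = Real.exp (-(c * (p * (N / p + 1) : ℕ))) := by
    rw [← Real.exp_nat_mul]
    push_cast
    ring_nf
  _ ≤ Real.exp (-c * N) := by
    rw [neg_mul]
    gcongr
    exact (Nat.lt_mul_div_succ N (Nat.pos_of_ne_zero hp)).le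

/-- Windows of radius `ρ` about points at distance at most `ρ` overlap in length at least `ρ`, so
`hZ` carries `Z` from one window to the next. -/
lemma Icc_subset_of_forall_subinterval {Z : Set ℝ} {c d ρ : ℝ} (hρ : 0 < ρ) (hρcd : ρ ≤ d - c)
    (hZ : ∀ a b a' b', Icc a b ⊆ Icc c d → a < b → b - a ≤ 2 * ρ → Icc a' b' ⊆ Icc a b →
      ρ ≤ b' - a' → Icc a' b' ⊆ Z → Icc a b ⊆ Z)
    {x₀ : ℝ} (hx₀ : x₀ ∈ Icc c d) (hx₀Z : Icc (max c (x₀ - ρ)) (min d (x₀ + ρ)) ⊆ Z) :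
    Icc c d ⊆ Z := by
  have hstep {x y : ℝ} (hx : x ∈ Icc c d) (hy : y ∈ Icc c d) (hxy : |x - y| ≤ ρ)
      (hxZ : Icc (max c (x - ρ)) (min d (x + ρ)) ⊆ Z) :
      Icc (max c (y - ρ)) (min d (y + ρ)) ⊆ Z := by
    obtain ⟨hyx, hxy⟩ := abs_le.1 hxy
    refine hZ _ _ (max c (max x y - ρ)) (min d (min x y + ρ)) ?_ ?_ ?_ ?_ ?_
      ((Icc_subset_Icc ?_ ?_).trans hxZ)
    all_goals grind
  intro y hy
  refine isPreconnected_Icc.induction₂'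
    (fun x y => Icc (max c (x - ρ)) (min d (x + ρ)) ⊆ Z → Icc (max c (y - ρ)) (min d (y + ρ)) ⊆ Z)
    (fun x hx => ?_) (fun _ _ _ _ _ _ hxy hyz => hyz ∘ hxy) hx₀ hy hx₀Z
    ⟨max_le hy.1 (by linarith), le_min hy.2 (by linarith)⟩
  filter_upwards [mem_nhdsWithin_of_mem_nhds (Metric.closedBall_mem_nhds x hρ),
    self_mem_nhdsWithin] with z hz hzI
  exact ⟨hstep hx hzI (by rwa [abs_sub_comm]), hstep hzI hx hz⟩

section Quasianalytic

variable {f : ℝ → ℝ} (hf : ContinuousOn f (Icc (-1) 1)) {β : ℝ}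

include hf

/-- With `N / p + 1` nodes the interpolation constant is at most `exp (β / 2 * N)`, while the
remainder decays like `exp (-2 * N)` and beats the Bernstein–Walsh factor `exp N`. -/
lemma abs_le_of_dense_zeros {M : ℝ} (hM : ∀ x ∈ Icc (-1 : ℝ) 1, |f x| ≤ M) (hβ : 0 < β)
    {θ : ℝ} (hθ : 0 < θ) {p : ℕ} (hp0 : p ≠ 0)
    (hp : 2 * Real.exp 1 / θ ≤ Real.exp (p * (β / 2)))
    {a b : ℝ} (hab : Icc a b ⊆ Icc (-1) 1) (hlt : a < b) (hδ : b - a ≤ Real.exp (-(p * 2)) / 2)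
    (hdens : θ * (b - a) ≤ volume.real ({x | |f x| ≤ 0} ∩ Icc a b)) {N : ℕ}
    (hN : En f N ≤ Real.exp (-β * N)) {x : ℝ} (hx : x ∈ Icc a b) :
    |f x| ≤ Real.exp (-β * N) + (Real.exp 1 * Real.exp (-(β / 2) * N) +
      (M + 1) * Real.exp (-1 * N)) := by
  set μ := volume.real ({x | |f x| ≤ 0} ∩ Icc a b)
  have hba : 0 < b - a := sub_pos.2 hlt
  have hμ : 0 < μ := (mul_pos hθ hba).trans_le hdens
  have hbound := abs_le_of_sublevel_inter_Icc hf hM hab hμ (r := 1 / 2) one_half_pos N (N / p) hx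
  have hgrowth : (2 * Real.exp 1 * (b - a) / μ) ^ (N / p) ≤ Real.exp (β / 2 * N) := by
    refine pow_div_le_exp_mul (by positivity) (half_pos hβ).le (le_trans ?_ hp) N
    rw [div_le_div_iff₀ hμ hθ, mul_assoc _ (b - a), mul_comm (b - a)]
    gcongr
  have hdecay : ((b - a) / (1 / 2)) ^ (N / p + 1) ≤ Real.exp (-2 * N) :=
    pow_div_add_one_le_exp_neg_mul hp0 (by positivity) zero_le_two (by linarith) N
  have hE0 := En_nonneg f N
  have hM0 : 0 ≤ M := (abs_nonneg _).trans (hM x (hab hx))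
  have hE1 := En_le_one_of_le_exp_neg_mul hβ hN
  rw [zero_add, mul_one_div_cancel two_ne_zero, Real.sqrt_one, mul_one] at hbound
  refine hbound.trans (add_le_add hN (add_le_add ?_ ?_))
  · calc En f N * (Real.exp 1 * (2 * Real.exp 1 * (b - a) / μ) ^ (N / p))
      _ ≤ Real.exp (-β * N) * (Real.exp 1 * Real.exp (β / 2 * N)) := by gcongr
      _ = Real.exp 1 * Real.exp (-(β / 2) * N) := by
        rw [mul_left_comm, ← Real.exp_add]
        ring_nf
  · calc (M + En f N) * Real.exp N * ((b - a) / (1 / 2)) ^ (N / p + 1)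
      _ ≤ (M + 1) * Real.exp N * Real.exp (-2 * N) := by gcongr
      _ = (M + 1) * Real.exp (-1 * N) := by
        rw [mul_assoc, ← Real.exp_add]
        ring_nf

lemma exists_eq_zero_of_dense_zeros (hβ : 0 < β)
    (hfreq : ∃ᶠ N : ℕ in atTop, En f N ≤ Real.exp (-β * N)) {θ : ℝ} (hθ : 0 < θ) :
    ∃ δ > 0, ∀ a b, Icc a b ⊆ Icc (-1) 1 → a < b → b - a ≤ δ →
      θ * (b - a) ≤ volume.real ({x | |f x| ≤ 0} ∩ Icc a b) → ∀ x ∈ Icc a b, f x = 0 := by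
  obtain ⟨M, hM⟩ := isCompact_Icc.exists_bound_of_continuousOn hf
  obtain ⟨p, hp⟩ := exists_nat_gt (max 0 (Real.log (2 * Real.exp 1 / θ) / (β / 2)))
  obtain ⟨hp0, hp⟩ := max_lt_iff.1 hp
  rw [div_lt_iff₀ (half_pos hβ), Real.log_lt_iff_lt_exp (by positivity)] at hp
  rw [Nat.cast_pos] at hp0
  refine ⟨Real.exp (-(p * 2)) / 2, by positivity, fun a b hab hlt hδ hdens x hx => ?_⟩
  have hexp {c : ℝ} (hc : c < 0) : Tendsto (fun N : ℕ => Real.exp (c * N)) atTop (𝓝 0) :=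
    Real.tendsto_exp_atBot.comp (tendsto_natCast_atTop_atTop.const_mul_atTop_of_neg hc)
  have hlim : Tendsto (fun N : ℕ => Real.exp (-β * N) + (Real.exp 1 * Real.exp (-(β / 2) * N) +
      (M + 1) * Real.exp (-1 * N))) atTop (𝓝 0) := by
    simpa using (hexp (neg_lt_zero.2 hβ)).add
      (((hexp (neg_lt_zero.2 (half_pos hβ))).const_mul (Real.exp 1)).add
        ((hexp neg_one_lt_zero).const_mul (M + 1)))
  refine abs_nonpos_iff.1 (ge_of_tendsto_of_frequently hlim (hfreq.mono fun N hN => ?_))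
  exact abs_le_of_dense_zeros hf hM hβ hθ hp0.ne' hp.le hab hlt hδ hdens hN hx

lemma eqOn_zero_of_zeros_volume_pos (hβ : 0 < β)
    (hfreq : ∃ᶠ N : ℕ in atTop, En f N ≤ Real.exp (-β * N))
    (hvol : 0 < volume.real ({x | |f x| ≤ 0} ∩ Icc (-1) 1)) : ∀ x ∈ Icc (-1 : ℝ) 1, f x = 0 := by
  set V := volume.real ({x | |f x| ≤ 0} ∩ Icc (-1) 1)
  obtain ⟨δ, hδ, hdense⟩ := exists_eq_zero_of_dense_zeros hf hβ hfreq
    (θ := min (V / 2) (1 / 2)) (by positivity)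
  obtain ⟨a, b, hab, ⟨hηlt, hηle⟩, hV⟩ := exists_subinterval_volume_mul_le {x | |f x| ≤ 0}
    (c := -1) (d := 1) (η := min δ 2) (by positivity) (by norm_num)
  have hηδ := min_le_left δ 2
  have hη2 := min_le_right δ 2
  have hlt : a < b := by linarith
  have hzero : Icc a b ⊆ {x | f x = 0} := by
    refine hdense a b hab hlt (by linarith) ?_
    have := mul_le_mul_of_nonneg_right (min_le_left (V / 2) (1 / 2)) (sub_pos.2 hlt).le
    linarith
  obtain ⟨ha, hb⟩ := (Icc_subset_Icc_iff hlt.le).1 hab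
  refine Icc_subset_of_forall_subinterval (ρ := min δ 2 / 4) (by linarith) (by linarith) ?_
    (x₀ := (a + b) / 2) ⟨by linarith, by linarith⟩
    ((Icc_subset_Icc ?_ ?_).trans hzero)
  · intro a' b' a'' b'' hI hlt' hle hsub hlen hZ
    refine hdense a' b' hI hlt' (by linarith) ?_
    calc min (V / 2) (1 / 2) * (b' - a') ≤ 1 / 2 * (b' - a') := by
          gcongr
          exact min_le_right _ _
      _ ≤ b'' - a'' := by linarith
      _ ≤ volume.real (Icc a'' b'') := by rw [Real.volume_real_Icc]; exact le_max_left _ _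
      _ ≤ volume.real ({x | |f x| ≤ 0} ∩ Icc a' b') :=
        measureReal_mono (fun x hx => ⟨abs_nonpos_iff.2 (hZ hx), hsub hx⟩)
          (measure_ne_top_of_subset inter_subset_right measure_Icc_lt_top.ne)
  · exact le_max_of_le_right (by linarith)
  · exact min_le_of_right_le (by linarith)

end Quasianalytic

lemma mf_eq (f : ℝ → ℝ) (t : ℝ) : mf f t = volume.real ({x | |f x| ≤ t} ∩ Icc (-1) 1) := by
  rw [inter_comm]
  rfl

lemma tendsto_mf_zero {f : ℝ → ℝ} (hf : ContinuousOn f (Icc (-1) 1))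
    (hnull : volume.real ({x | |f x| ≤ 0} ∩ Icc (-1) 1) = 0) :
    Tendsto (mf f) (𝓝[>] 0) (𝓝 0) := by
  have hcompact := fun t => isCompact_sublevel_inter_Icc hf t Subset.rfl
  have hinter : ⋂ t > 0, {x | |f x| ≤ t} ∩ Icc (-1) 1 = {x | |f x| ≤ 0} ∩ Icc (-1) 1 := by
    ext x
    simp only [mem_iInter, mem_inter_iff, mem_ofPred_eq]
    exact ⟨fun h => ⟨le_of_forall_gt_imp_ge_of_dense fun t ht => (h t ht).1, (h 1 one_pos).2⟩,
      fun h t ht => ⟨h.1.trans ht.le, h.2⟩⟩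
  have hmeas := tendsto_measure_biInter_gt (μ := volume) (a := (0 : ℝ))
    (s := fun t => {x | |f x| ≤ t} ∩ Icc (-1) 1)
    (fun t _ => (hcompact t).measurableSet.nullMeasurableSet)
    (fun _ _ _ hst => inter_subset_inter_left _ fun _ hx => hx.trans hst)
    ⟨1, one_pos, (hcompact 1).measure_lt_top.ne⟩
  rw [hinter] at hmeas
  have hreal := (ENNReal.tendsto_toReal (hcompact 0).measure_lt_top.ne).comp hmeas
  rw [← measureReal_def, hnull] at hreal
  exact hreal.congr fun t => (mf_eq f t).symm

/-- Some interval longer than `mf f t`, yet of length at most `2 * mf f t`, carries at least the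
average density of `{|f| ≤ t'}`; by its length it contains a point where `t < |f|`. -/
lemma le_of_mf_pos {f : ℝ → ℝ} (hf : ContinuousOn f (Icc (-1) 1)) {M : ℝ}
    (hM : ∀ x ∈ Icc (-1 : ℝ) 1, |f x| ≤ M) {t t' r : ℝ} (ht : 0 < mf f t) (ht1 : mf f t ≤ 1)
    (ht' : 0 < mf f t') (hr : 0 < r) (N q : ℕ) :
    t ≤ En f N + ((t' + En f N) * (Real.exp 1 * (4 * Real.exp 1 / mf f t') ^ q) +
      (M + En f N) * Real.exp (N * √(2 * r)) * (2 * mf f t / r) ^ (q + 1)) := by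
  obtain ⟨a, b, hab, ⟨hlt, hle⟩, hdens⟩ := exists_subinterval_volume_mul_le {x | |f x| ≤ t'}
    (c := -1) (d := 1) (η := 2 * mf f t) (by positivity) (by linarith)
  rw [mul_div_cancel_left₀ _ two_ne_zero] at hlt
  rw [← mf_eq] at hdens
  have hba : 0 < b - a := ht.trans hlt
  have hμ : 0 < volume.real ({x | |f x| ≤ t'} ∩ Icc a b) := by
    linarith [mul_pos ht' hba]
  obtain ⟨x, hx, htx⟩ : ∃ x ∈ Icc a b, t < |f x| := by
    contrapose! hlt with hsub
    rw [mf_eq]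
    calc b - a ≤ volume.real (Icc a b) := by rw [Real.volume_real_Icc]; exact le_max_left _ _
      _ ≤ volume.real ({x | |f x| ≤ t} ∩ Icc (-1) 1) :=
        measureReal_mono (subset_inter hsub hab)
          (isCompact_sublevel_inter_Icc hf t Subset.rfl).measure_lt_top.ne
  have hratio : 2 * Real.exp 1 * (b - a) / volume.real ({x | |f x| ≤ t'} ∩ Icc a b) ≤
      4 * Real.exp 1 / mf f t' := by
    rw [div_le_div_iff₀ hμ ht']
    calc 2 * Real.exp 1 * (b - a) * mf f t' = 2 * Real.exp 1 * (mf f t' * (b - a)) := by ring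
      _ ≤ 2 * Real.exp 1 * ((1 - -1) * volume.real ({x | |f x| ≤ t'} ∩ Icc a b)) := by gcongr
      _ = _ := by ring
  have hM0 : 0 ≤ M := (abs_nonneg _).trans (hM x (hab hx))
  obtain ⟨y, hyt', -⟩ := nonempty_of_measureReal_ne_zero hμ.ne'
  have ht'0 : 0 ≤ t' := (abs_nonneg _).trans hyt'
  have hE0 := En_nonneg f N
  refine htx.le.trans ((abs_le_of_sublevel_inter_Icc hf hM hab hμ hr N q hx).trans ?_)
  gcongr

lemma neg_log_mul_log_sub_log_le {E A B X s : ℝ} (hE : 0 < E) (hA : 0 < A) (hEB : E ≤ 2 * B)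
    (hX : 1 ≤ X) (hs : 0 < s) (hs1 : s < 1) (h : ∀ q : ℕ, E ≤ A * X ^ q + B * s ^ (q + 1)) :
    -Real.log s * (Real.log E - Real.log (2 * A)) ≤ Real.log X * Real.log (2 * B / E) := by
  have hσ : 0 < -Real.log s := neg_pos.2 (Real.log_neg hs hs1)
  have hB : 0 < B := by linarith
  have hT : 0 ≤ Real.log (2 * B / E) := Real.log_nonneg ((one_le_div hE).2 hEB)
  -- About the least `q` for which the second summand in `h q` is at most `E / 2`.
  set q := ⌊Real.log (2 * B / E) / -Real.log s⌋₊
  have hqle : -Real.log s * q ≤ Real.log (2 * B / E) := by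
    rw [← le_div_iff₀' hσ]
    exact Nat.floor_le (by positivity)
  have hltq : Real.log (2 * B / E) < -Real.log s * (q + 1) := by
    rw [← div_lt_iff₀' hσ]
    exact Nat.lt_floor_add_one _
  have hsmall : s ^ (q + 1) ≤ (2 * B / E)⁻¹ := by
    rw [← Real.log_le_log_iff (by positivity) (by positivity), Real.log_pow, Real.log_inv]
    push_cast
    linarith
  have hhalf : B * s ^ (q + 1) ≤ E / 2 := calc
    B * s ^ (q + 1) ≤ B * (2 * B / E)⁻¹ := by gcongr
    _ = E / 2 := by field_simp
  have hlog : Real.log E ≤ Real.log (2 * A) + q * Real.log X := by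
    rw [← Real.log_pow, ← Real.log_mul (by positivity) (by positivity)]
    exact Real.log_le_log hE (by linarith [h q])
  calc -Real.log s * (Real.log E - Real.log (2 * A)) ≤ -Real.log s * (q * Real.log X) := by
        gcongr
        linarith
    _ = Real.log X * (-Real.log s * q) := by ring
    _ ≤ Real.log X * Real.log (2 * B / E) := by
        gcongr
        exact Real.log_nonneg hX

/-- The radius `√(2 * mf f t)` balances the two requirements on the Cauchy radius: it tends to `0`
with `mf f t`, and so does the quotient of the length `2 * mf f t` by it. -/
lemma le_mul_pow_add_of_mf_pos {f : ℝ → ℝ} (hf : ContinuousOn f (Icc (-1) 1)) {M : ℝ}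
    (hM : ∀ x ∈ Icc (-1 : ℝ) 1, |f x| ≤ M) {t : ℝ} {N : ℕ} (hE1 : En f N ≤ 1)
    (ht : 0 < mf f t) (ht1 : mf f t ≤ 1) (hm' : 0 < mf f (En f N))
    (hX : 1 ≤ 4 * Real.exp 1 / mf f (En f N)) (q : ℕ) :
    t ≤ 7 * En f N * (4 * Real.exp 1 / mf f (En f N)) ^ q +
      (M + 1) * Real.exp (N * √(2 * √(2 * mf f t))) * √(2 * mf f t) ^ (q + 1) := by
  have hbound := le_of_mf_pos hf hM ht ht1 hm' (r := √(2 * mf f t)) (by positivity) N q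
  rw [Real.div_sqrt] at hbound
  set E := En f N
  set X := 4 * Real.exp 1 / mf f E
  have hE0 : 0 ≤ E := En_nonneg f N
  have hfirst : E + (E + E) * (Real.exp 1 * X ^ q) ≤ 7 * E * X ^ q := calc
    E + (E + E) * (Real.exp 1 * X ^ q) ≤ E * X ^ q + (E + E) * (3 * X ^ q) := by
      gcongr
      · exact le_mul_of_one_le_right hE0 (one_le_pow₀ hX)
      · exact Real.exp_one_lt_three.le
    _ = 7 * E * X ^ q := by ring
  have hsecond : (M + E) * Real.exp (N * √(2 * √(2 * mf f t))) * √(2 * mf f t) ^ (q + 1) ≤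
      (M + 1) * Real.exp (N * √(2 * √(2 * mf f t))) * √(2 * mf f t) ^ (q + 1) := by gcongr
  linarith

lemma neg_log_div_four_le_neg_log_sqrt {m : ℝ} (hm : 0 < m) (hm4 : m ≤ 1 / 4) :
    -Real.log m / 4 ≤ -Real.log √(2 * m) := by
  have hlog := Real.log_le_log hm hm4
  rw [one_div, Real.log_inv, show (4 : ℝ) = 2 * 2 by norm_num,
    Real.log_mul two_ne_zero two_ne_zero] at hlog
  rw [Real.log_sqrt (by positivity), Real.log_mul two_ne_zero hm.ne']
  linarith

lemma log_div_le_two_mul_neg_log {c m : ℝ} (hc : 0 < c) (hm : 0 < m) (hmc : m ≤ 1 / c) :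
    Real.log (c / m) ≤ 2 * -Real.log m := by
  have hlog := Real.log_le_log hm hmc
  rw [one_div, Real.log_inv] at hlog
  rw [Real.log_div hc.ne' hm.ne']
  linarith

lemma neg_log_mf_mul_le {f : ℝ → ℝ} (hf : ContinuousOn f (Icc (-1) 1)) {M : ℝ}
    (hM : ∀ x ∈ Icc (-1 : ℝ) 1, |f x| ≤ M) {t : ℝ} {N : ℕ} (ht0 : 0 < t) (ht1 : t ≤ 1)
    (hE0 : 0 < En f N) (hE1 : En f N ≤ 1) (hm : 0 < mf f t) (hm4 : mf f t ≤ 1 / 4)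
    (hm' : 0 < mf f (En f N)) (hme' : mf f (En f N) ≤ 1 / (4 * Real.exp 1)) :
    -Real.log (mf f t) * (-Real.log (En f N) - (-Real.log t + Real.log 14)) ≤
      -Real.log (mf f (En f N)) *
        (8 * (-Real.log t + Real.log (2 * (M + 1)) + N * √(2 * √(2 * mf f t)))) := by
  have hM0 : 0 ≤ M := (abs_nonneg _).trans (hM 0 (by norm_num))
  have he : 1 ≤ 4 * Real.exp 1 := by linarith [Real.add_one_le_exp 1]
  have hX : 1 ≤ 4 * Real.exp 1 / mf f (En f N) :=
    (one_le_div hm').2 (hme'.trans ((div_le_one₀ (by positivity)).2 he |>.trans he))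
  have hB : 1 ≤ Real.exp (N * √(2 * √(2 * mf f t))) := Real.one_le_exp (by positivity)
  have hkey := neg_log_mul_log_sub_log_le ht0 (by positivity)
    (by nlinarith) hX (by positivity) (by rw [Real.sqrt_lt' one_pos]; linarith)
    (le_mul_pow_add_of_mf_pos hf hM hE1 hm (by linarith) hm' hX)
  have hlogA : Real.log (2 * (7 * En f N)) = Real.log 14 + Real.log (En f N) := by
    rw [← Real.log_mul (by norm_num) hE0.ne']
    ring_nf
  have hlogB : Real.log (2 * ((M + 1) * Real.exp (N * √(2 * √(2 * mf f t)))) / t) =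
      -Real.log t + Real.log (2 * (M + 1)) + N * √(2 * √(2 * mf f t)) := by
    rw [← mul_assoc, Real.log_div (by positivity) ht0.ne',
      Real.log_mul (by positivity) (by positivity), Real.log_exp]
    ring
  have hσ := neg_log_div_four_le_neg_log_sqrt hm hm4
  have hlogX := log_div_le_two_mul_neg_log (by positivity) hm' hme'
  rw [hlogA, hlogB] at hkey
  set T := -Real.log t + Real.log (2 * (M + 1)) + N * √(2 * √(2 * mf f t))
  have hT : 0 ≤ T := by
    have hlog := Real.log_nonneg (show 1 ≤ 2 * (M + 1) by linarith)
    have hsqrt : 0 ≤ N * √(2 * √(2 * mf f t)) := by positivity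
    linarith [Real.log_nonpos ht0.le ht1]
  have hl' : Real.log (mf f (En f N)) ≤ 0 :=
    Real.log_nonpos hm'.le (hme'.trans ((div_le_one₀ (by positivity)).2 he))
  rcases le_total (-Real.log (En f N)) (-Real.log t + Real.log 14) with hY | hY
  · refine (mul_nonpos_of_nonneg_of_nonpos ?_ (sub_nonpos.2 hY)).trans ?_
    · exact neg_nonneg.2 (Real.log_nonpos hm.le (by linarith))
    · exact mul_nonneg (neg_nonneg.2 hl') (by positivity)
  · linarith [mul_le_mul_of_nonneg_right hσ (sub_nonneg.2 hY),
      mul_le_mul_of_nonneg_right hlogX hT]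

lemma tendsto_atTop_of_tendsto_succ_div {a : ℕ → ℝ} (ha : ∀ j, 0 ≤ a j)
    (h : Tendsto (fun j => a (j + 1) / a j) atTop atTop) : Tendsto a atTop atTop := by
  obtain ⟨J, hJ⟩ := eventually_atTop.1 (h.eventually_ge_atTop 2)
  have hpos {j : ℕ} (hj : J ≤ j) : 0 < a j := (ha j).lt_of_ne' fun h0 => by
    have := hJ j hj
    norm_num [h0] at this
  refine (tendsto_add_atTop_iff_nat J).1 (tendsto_atTop_of_geom_le (c := 2)
    (hpos (Nat.le_add_left _ _)) one_lt_two fun j => ?_)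
  rw [Nat.add_right_comm]
  exact (le_div_iff₀ (hpos (Nat.le_add_left _ _))).1 (hJ _ (Nat.le_add_left _ _))

lemma tendsto_nhdsGT_zero_of_tendsto_log_atBot {ι : Type*} {F : Filter ι} {u : ι → ℝ}
    (hu : ∀ j, 0 ≤ u j) (h : Tendsto (fun j => Real.log (u j)) F atBot) :
    Tendsto u F (𝓝[>] 0) := by
  refine (Real.tendsto_exp_atBot_nhdsGT.comp h).congr' ?_
  filter_upwards [h.eventually_lt_atBot 0] with j hj
  exact Real.exp_log ((hu j).lt_of_ne' fun h0 => by simp [h0] at hj)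

lemma tendsto_atTop_of_tendsto_comp_nhdsNE {ι X : Type*} [TopologicalSpace X] [T1Space X]
    {F : Filter ι} {u : ℕ → X} {n : ι → ℕ} {a : X} (h : Tendsto (fun j => u (n j)) F (𝓝[≠] a)) :
    Tendsto n F atTop := by
  rw [← Nat.cofinite_eq_atTop]
  exact (tendsto_comap_iff.2 (h.mono_right (nhdsNE_le_cofinite a))).mono_right (comap_cofinite_le u)

lemma tendsto_div_atTop_of_mul_le {ι : Type*} {F : Filter ι} {X D D' l l' : ι → ℝ}
    (hD : D =o[F] X) (hD' : D' =o[F] X) (hX : ∀ᶠ j in F, 0 < X j) (hl : ∀ᶠ j in F, 0 < l j)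
    (hl' : ∀ᶠ j in F, 0 ≤ l' j) (h : ∀ᶠ j in F, l j * (X j - D' j) ≤ l' j * D j) :
    Tendsto (fun j => l' j / l j) F atTop := by
  refine tendsto_atTop.2 fun C => ?_
  have hc : 0 < (2 * (|C| + 1))⁻¹ := by positivity
  filter_upwards [hD.bound hc, hD'.bound one_half_pos, hX, hl, hl', h]
    with j hDj hD'j hXj hlj hl'j hj
  rw [Real.norm_of_nonneg hXj.le] at hDj hD'j
  have hle : l j * (1 / 2) ≤ l' j * (2 * (|C| + 1))⁻¹ := by
    refine le_of_mul_le_mul_right ?_ hXj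
    calc l j * (1 / 2) * X j = l j * (X j - 1 / 2 * X j) := by ring
      _ ≤ l j * (X j - D' j) := by
        gcongr
        exact (le_abs_self _).trans hD'j
      _ ≤ l' j * D j := hj
      _ ≤ l' j * ((2 * (|C| + 1))⁻¹ * X j) := by
        gcongr
        exact (le_abs_self _).trans hDj
      _ = l' j * (2 * (|C| + 1))⁻¹ * X j := by ring
  rw [mul_inv, ← mul_assoc, ← div_eq_mul_inv _ (|C| + 1), le_div_iff₀ (by positivity)] at hle
  rw [le_div_iff₀ hlj]
  nlinarith [le_abs_self C]

lemma volume_real_zeros_eq_zero {f : ℝ → ℝ} (hf : ContinuousOn f (Icc (-1) 1))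
    (hf0 : ∃ x ∈ Icc (-1 : ℝ) 1, f x ≠ 0) {β : ℝ} (hβ : 0 < β)
    (hfreq : ∃ᶠ N : ℕ in atTop, En f N ≤ Real.exp (-β * N)) :
    volume.real ({x | |f x| ≤ 0} ∩ Icc (-1) 1) = 0 := by
  by_contra hne
  obtain ⟨x, hx, hfx⟩ := hf0
  exact hfx (eqOn_zero_of_zeros_volume_pos hf hβ hfreq (measureReal_nonneg.lt_of_ne' hne) x hx)

lemma isLittleO_of_tendsto_div_atTop {ι : Type*} {F : Filter ι} {L X : ι → ℝ}
    (h : Tendsto (fun j => X j / L j) F atTop) : L =o[F] X := by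
  refine isLittleO_of_tendsto' ?_ (h.inv_tendsto_atTop.congr fun j => inv_div _ _)
  filter_upwards [h.eventually_gt_atTop 0] with j hj hXj
  simp [hXj] at hj

lemma isLittleO_add_const {ι : Type*} {F : Filter ι} {L X : ι → ℝ} (hL : L =o[F] X)
    (hX : Tendsto X F atTop) (c : ℝ) : (fun j => L j + c) =o[F] X :=
  hL.add (isLittleO_const_left.2 (Or.inr (tendsto_abs_atTop_atTop.comp hX)))

section Limit

variable {f : ℝ → ℝ} {β : ℝ} {n : ℕ → ℕ}

lemma mul_le_abs_log_En {N : ℕ} (hE0 : 0 < En f N) (hN : En f N ≤ Real.exp (-β * N)) :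
    β * N ≤ |Real.log (En f N)| := by
  have hlog : Real.log (En f N) ≤ -β * N := (Real.log_le_iff_le_exp hE0).2 hN
  linarith [neg_le_abs (Real.log (En f N))]

lemma tendsto_En_nhdsGT_zero (hE1 : ∀ j, En f (n j) ≤ 1)
    (hlog : Tendsto (fun j => |Real.log (En f (n j))|) atTop atTop) :
    Tendsto (fun j => En f (n j)) atTop (𝓝[>] 0) := by
  refine tendsto_nhdsGT_zero_of_tendsto_log_atBot (fun j => En_nonneg f (n j)) ?_
  refine (tendsto_neg_atTop_atBot.comp hlog).congr fun j => ?_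
  rw [Function.comp_apply, abs_of_nonpos (Real.log_nonpos (En_nonneg f _) (hE1 j)), neg_neg]

lemma tendsto_mf_En_zero (hf : ContinuousOn f (Icc (-1) 1))
    (hf0 : ∃ x ∈ Icc (-1 : ℝ) 1, f x ≠ 0) (hβ : 0 < β)
    (happrox : ∀ j, En f (n j) ≤ Real.exp (-β * n j))
    (hEn : Tendsto (fun j => En f (n j)) atTop (𝓝[>] 0)) :
    Tendsto (fun j => mf f (En f (n j))) atTop (𝓝 0) := by
  have hn : Tendsto n atTop atTop :=
    tendsto_atTop_of_tendsto_comp_nhdsNE (hEn.mono_right (nhdsGT_le_nhdsNE 0))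
  have hfreq : ∃ᶠ N : ℕ in atTop, En f N ≤ Real.exp (-β * N) :=
    hn.frequently (Eventually.of_forall happrox).frequently
  exact (tendsto_mf_zero hf (volume_real_zeros_eq_zero hf hf0 hβ hfreq)).comp hEn

lemma isLittleO_mul_sqrt_mf (hβ : 0 < β)
    (happrox : ∀ j, En f (n j) ≤ Real.exp (-β * n j))
    (hEn : Tendsto (fun j => En f (n j)) atTop (𝓝[>] 0))
    (hmf : Tendsto (fun j => mf f (En f (n j))) atTop (𝓝 0)) :
    (fun j => (n (j + 1) : ℝ) * √(2 * √(2 * mf f (En f (n j))))) =o[atTop]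
      fun j => |Real.log (En f (n (j + 1)))| := by
  have hN : (fun j => (n (j + 1) : ℝ)) =O[atTop] fun j => |Real.log (En f (n (j + 1)))| := by
    refine IsBigO.of_bound β⁻¹ ?_
    filter_upwards [(hEn.comp (tendsto_add_atTop_nat 1)).eventually self_mem_nhdsWithin]
      with j hj
    rw [Real.norm_natCast, Real.norm_eq_abs, abs_abs, le_inv_mul_iff₀ hβ]
    exact mul_le_abs_log_En hj (happrox (j + 1))
  have hsqrt : Tendsto (fun j => √(2 * √(2 * mf f (En f (n j))))) atTop (𝓝 0) := by
    simpa using (((hmf.const_mul 2).sqrt).const_mul 2).sqrt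
  simpa using hN.mul_isLittleO ((isLittleO_one_iff ℝ).2 hsqrt)

lemma eventually_abs_log_mf_mul_le (hf : ContinuousOn f (Icc (-1) 1)) {M : ℝ}
    (hM : ∀ x ∈ Icc (-1 : ℝ) 1, |f x| ≤ M) (hE1 : ∀ j, En f (n j) ≤ 1)
    (hEn : Tendsto (fun j => En f (n j)) atTop (𝓝[>] 0))
    (hm : ∀ j, 0 < mf f (En f (n j)))
    (hmf : Tendsto (fun j => mf f (En f (n j))) atTop (𝓝 0)) :
    ∀ᶠ j in atTop, |Real.log (mf f (En f (n j)))| *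
        (|Real.log (En f (n (j + 1)))| - (|Real.log (En f (n j))| + Real.log 14)) ≤
      |Real.log (mf f (En f (n (j + 1))))| *
        (8 * (|Real.log (En f (n j))| + Real.log (2 * (M + 1)) +
          n (j + 1) * √(2 * √(2 * mf f (En f (n j)))))) := by
  have he : (1 : ℝ) / (4 * Real.exp 1) ≤ 1 / 4 :=
    one_div_le_one_div_of_le (by norm_num) (by linarith [Real.add_one_le_exp 1])
  have hpos := hEn.eventually self_mem_nhdsWithin
  have hsmall := hmf.eventually_le_const (u := 1 / (4 * Real.exp 1)) (by positivity)
  filter_upwards [hpos, (tendsto_add_atTop_nat 1).eventually hpos, hsmall,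
    (tendsto_add_atTop_nat 1).eventually hsmall] with j hE hE' hmj hmj'
  rw [abs_of_nonpos (Real.log_nonpos hE.le (hE1 j)),
    abs_of_nonpos (Real.log_nonpos hE'.le (hE1 (j + 1))),
    abs_of_nonpos (Real.log_nonpos (hm j).le (by linarith)),
    abs_of_nonpos (Real.log_nonpos (hm (j + 1)).le (by linarith))]
  exact neg_log_mf_mul_le hf hM hE (hE1 j) hE' (hE1 (j + 1)) (hm j) (hmj.trans he) (hm (j + 1))
    hmj'

end Limit

theorem bernstein_level_sets_En_version_general
    (f : ℝ → ℝ) (hf : ContinuousOn f (Icc (-1 : ℝ) 1))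
    (hf0 : ∃ x ∈ Icc (-1 : ℝ) 1, f x ≠ 0)
    (β : ℝ) (hβ : 0 < β) (n : ℕ → ℕ)
    (happrox : ∀ j, En f (n j) ≤ Real.exp (-β * (n j : ℝ)))
    (hE : Tendsto (fun j => |Real.log (En f (n (j + 1)))| / |Real.log (En f (n j))|)
      atTop atTop)
    (hm : ∀ j, 0 < mf f (En f (n j))) :
    Tendsto (fun j => |Real.log (mf f (En f (n (j + 1))))| /
      |Real.log (mf f (En f (n j)))|) atTop atTop := by
  obtain ⟨M, hM⟩ := isCompact_Icc.exists_bound_of_continuousOn hf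
  have hE1 (j : ℕ) : En f (n j) ≤ 1 := En_le_one_of_le_exp_neg_mul hβ (happrox j)
  have hlog : Tendsto (fun j => |Real.log (En f (n j))|) atTop atTop :=
    tendsto_atTop_of_tendsto_succ_div (a := fun j => |Real.log (En f (n j))|)
      (fun _ => abs_nonneg _) hE
  have hEn := tendsto_En_nhdsGT_zero hE1 hlog
  have hmf := tendsto_mf_En_zero hf hf0 hβ happrox hEn
  have hX := hlog.comp (tendsto_add_atTop_nat 1)
  have hL : (fun j => |Real.log (En f (n j))|) =o[atTop] fun j => |Real.log (En f (n (j + 1)))| :=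
    isLittleO_of_tendsto_div_atTop hE
  have hl : Tendsto (fun j => |Real.log (mf f (En f (n j)))|) atTop atTop :=
    tendsto_abs_atBot_atTop.comp (Real.tendsto_log_nhdsGT_zero.comp
      (tendsto_nhdsWithin_iff.2 ⟨hmf, Eventually.of_forall hm⟩))
  have hD := ((isLittleO_add_const hL hX (Real.log (2 * (M + 1)))).add
    (isLittleO_mul_sqrt_mf hβ happrox hEn hmf)).const_mul_left 8
  exact tendsto_div_atTop_of_mul_le hD (isLittleO_add_const hL hX (Real.log 14))
    (hX.eventually_gt_atTop 0) (hl.eventually_gt_atTop 0)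
    (Eventually.of_forall fun _ => abs_nonneg _)
    (eventually_abs_log_mf_mul_le hf hM hE1 hEn hm hmf)

theorem bernstein_level_sets_En_version
    (f : ℝ → ℝ) (hf : ContinuousOn f (Set.Icc (-1:ℝ) 1))
    (hf0 : ∃ x ∈ Set.Icc (-1:ℝ) 1, f x ≠ 0)
    (β : ℝ) (hβ : 0 < β)
    (n : ℕ → ℕ) (hmono : StrictMono n) (hpos : ∀ j, 0 < n j)
    (hlac : Tendsto (fun j => (n (j+1) : ℝ) / (n j : ℝ)) atTop atTop)
    (happrox : ∀ j, En f (n j) ≤ Real.exp (-β * (n j : ℝ)))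
    (hE : Tendsto (fun j => |Real.log (En f (n (j+1)))| / |Real.log (En f (n j))|)
      atTop atTop)
    (hm : ∀ j, 0 < mf f (En f (n j)) ∧ mf f (En f (n j)) < 1) :
    Tendsto (fun j => |Real.log (mf f (En f (n (j+1))))| /
      |Real.log (mf f (En f (n j)))|) atTop atTop :=
  bernstein_level_sets_En_version_general f hf hf0 β hβ n happrox hE fun j => (hm j).1
end
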